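/- arXiv:2004.05781 — 4 statements merged into one kernel-verified Lean document; each statement's English description precedes it below -/
import Mathlib

section
/- Let X_A ⊂ S^ℤ be a topologically mixing subshift of finite type and μ = μ_{(P_n : n ∈ ℤ)} a Markov measure on X_A satisfying the Doeblin condition. If the left shift T is nonsingular and conservative with respect to μ, and both limits lim_{n→∞} P_n and lim_{n→∞} P_{−n} exist (entrywise), then these two limits are equal; that is, lim_{|n|→∞} P_n exists. -/
/-!
Suppose `Q₁ s t ≠ Q₂ s t` for some `s, t`, and let `c` be their midpoint. Up to a sign `σ = ± 1`, the
function `φ a b = σ * 1[a = s] * (1[b = t] - c)` has negative drift along the chain at large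
positive times and positive drift at large negative times.

Large deviations (`exists_summable_bound`): over a window of `m` consecutive times at which the
drift of `φ` is at most `-ε`, the sum of `φ (x j) (x (j + 1))` is nonnegative only with probability
exponentially small in `m`. By Chernoff's method this probability is at most the total mass of the
product of the weighted kernels `P j a b * exp (ε / 2 * φ a b)`. Each of these is
sub-Markov and loses a definite amount of mass at `s`; by primitivity and the Doeblin condition `s`
is reached in `M` steps from everywhere with probability bounded below, so the mass decays by a
fixed factor over `M + 1` steps (`evol_block`).

By Borel–Cantelli there are `N` and a set `E` of positive measure such that for `x ∈ E` and
all `m ≥ N` the sum over `[K, K + m)` is negative and the sum over `[-K - m, -K)` is positive. If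
`x` and `T ^ n x` both lie in `E` with `n = m + 2 * K`, then the second window of `T ^ n x` is the first
window of `x`, which is absurd. So `E` does not return to itself at large times, contradicting the
infinite recurrence enjoyed by conservative nonsingular maps.
-/

open MeasureTheory Filter Topology

namespace MarkovSFT

/-- The space of two-sided sequences over `S`. -/
abbrev Seq (S : Type*) := ℤ → S

/-- The shift by `n`: `(T^n x)_k = x_{k+n}`. -/
def shiftZ {S : Type*} (n : ℤ) (x : Seq S) : Seq S := fun k => x (k + n)

/-- The left shift `T`. -/
def shiftMap {S : Type*} : Seq S → Seq S := shiftZ 1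

/-- The subshift of finite type determined by the adjacency matrix `A`. -/
def SFT {S : Type*} (A : S → S → Bool) : Set (Seq S) :=
  {x | ∀ n : ℤ, A (x n) (x (n + 1)) = true}

/-- `A` is primitive: all entries of `A^M` are positive for some `M ≥ 1`
(expressed via the existence of admissible paths of length `M`). -/
def IsPrimitive {S : Type*} (A : S → S → Bool) : Prop :=
  ∃ M : ℕ, 1 ≤ M ∧ ∀ s t : S, ∃ u : ℕ → S,
    u 0 = s ∧ u M = t ∧ ∀ i < M, A (u i) (u (i + 1)) = true

/-- A stochastic matrix over the finite state space `S`. -/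
def IsStochastic {S : Type*} [Fintype S] (P : S → S → ℝ) : Prop :=
  (∀ s t, 0 ≤ P s t) ∧ ∀ s, ∑ t, P s t = 1

/-- The Doeblin condition for the family of transition matrices `P` relative to `A`. -/
def Doeblin {S : Type*} (A : S → S → Bool) (P : ℤ → S → S → ℝ) : Prop :=
  ∃ δ : ℝ, 0 < δ ∧ ∀ (n : ℤ) (s t : S), δ ≤ P n s t ↔ A s t = true

/-- `μ` is the Markov measure on the SFT `X_A` determined by the transition
matrices `(P n)` and coordinate distributions `(π n)`. -/
structure IsMarkovMeasure {S : Type*} [Fintype S] [MeasurableSpace S]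
    (μ : Measure (Seq S)) (A : S → S → Bool)
    (P : ℤ → S → S → ℝ) (π : ℤ → S → ℝ) : Prop where
  isProb : IsProbabilityMeasure μ
  stochastic : ∀ n, IsStochastic (P n)
  compat : ∀ (n : ℤ) (s t : S), A s t = false → P n s t = 0
  dist_nonneg : ∀ (n : ℤ) (s : S), 0 ≤ π n s
  dist_sum : ∀ n : ℤ, ∑ s, π n s = 1
  consistent : ∀ (n : ℤ) (t : S), ∑ s, π n s * P n s t = π (n + 1) t
  supp : μ (SFT A) = 1
  cylinder : ∀ (k : ℤ) (m : ℕ) (w : Fin (m + 1) → S),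
    μ {x | ∀ i : Fin (m + 1), x (k + 1 + ((i : ℕ) : ℤ)) = w i}
      = ENNReal.ofReal (π (k + 1) (w 0) *
          ∏ i : Fin m, P (k + 1 + ((i : ℕ) : ℤ)) (w i.castSucc) (w i.succ))

/-- The left shift is nonsingular with respect to `μ`:
`μ` and `μ ∘ T⁻¹` are mutually absolutely continuous. -/
def ShiftNonsingular {S : Type*} [Fintype S] [MeasurableSpace S]
    (μ : Measure (Seq S)) : Prop :=
  Measure.map (shiftMap (S := S)) μ ≪ μ ∧ μ ≪ Measure.map (shiftMap (S := S)) μ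

/-- The left shift is conservative with respect to `μ`. -/
def ShiftConservative {S : Type*} [Fintype S] [MeasurableSpace S]
    (μ : Measure (Seq S)) : Prop :=
  ∀ E : Set (Seq S), MeasurableSet E → 0 < μ E →
    ∃ n : ℕ, 1 ≤ n ∧ 0 < μ (E ∩ (shiftMap (S := S))^[n] ⁻¹' E)

/-- An element of the pseudo full-group `[[T]]` of the shift, together with
(a version of) the logarithm of its Radon–Nikodym derivative `log dμ∘V/dμ`. -/
structure PFG {S : Type*} [Fintype S] [MeasurableSpace S] (μ : Measure (Seq S)) where
  dom : Set (Seq S)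
  toFun : Seq S → Seq S
  logDeriv : Seq S → ℝ
  meas_dom : MeasurableSet dom
  meas_toFun : Measurable toFun
  meas_logDeriv : Measurable logDeriv
  injOn : Set.InjOn toFun dom
  orbit : ∀ᵐ x ∂μ.restrict dom, ∃ n : ℤ, toFun x = shiftZ n x
  deriv_spec : ∀ E : Set (Seq S), E ⊆ dom → MeasurableSet E →
    μ (toFun '' E) = ∫⁻ x in E, ENNReal.ofReal (Real.exp (logDeriv x)) ∂μ

/-- `r` is an essential value of (the Radon–Nikodym cocycle of) the shift on `(X, μ)`. -/
def IsEssentialValue {S : Type*} [Fintype S] [MeasurableSpace S]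
    (μ : Measure (Seq S)) (r : ℝ) : Prop :=
  ∀ E : Set (Seq S), MeasurableSet E → 0 < μ E → ∀ ε : ℝ, 0 < ε →
    ∃ g : PFG μ,
      0 < μ (E ∩ g.dom ∩ g.toFun ⁻¹' E ∩ {x | |g.logDeriv x - r| < ε})

end MarkovSFT
namespace MarkovSFT

/-! ### Products of sub-Markov kernels -/

/-- The product of the kernels `G k, …, G (k + m - 1)` applied to the function `f`. -/
def evol {S : Type*} [Fintype S] (G : ℤ → S → S → ℝ) : ℤ → ℕ → (S → ℝ) → S → ℝ
  | _, 0, f => f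
  | k, m + 1, f => fun a => ∑ b, G k a b * evol G (k + 1) m f b

/-- A sub-Markov kernel, supported at least on the edges of `A` with weight `κ` there,
that loses mass at least `η` at the state `s`. -/
structure Leaky {S : Type*} [Fintype S] (A : S → S → Bool) (s : S) (η κ : ℝ)
    (G : S → S → ℝ) : Prop where
  nonneg : ∀ a b, 0 ≤ G a b
  row_le : ∀ a, ∑ b, G a b ≤ 1
  row_s : ∑ b, G s b ≤ 1 - η
  edge : ∀ a b, A a b = true → κ ≤ G a b

section Evol

variable {S : Type*} [Fintype S] {A : S → S → Bool} {s : S} {η κ : ℝ} {G : ℤ → S → S → ℝ}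

lemma evol_add (k : ℤ) (m n : ℕ) (f : S → ℝ) :
    evol G k (m + n) f = evol G k m (evol G (k + m) n f) := by
  induction m generalizing k with
  | zero => simp [evol]
  | succ m ih =>
    rw [show m + 1 + n = (m + n) + 1 by ring]
    funext a
    simp only [evol, ih]
    push_cast
    rw [show k + 1 + (m : ℤ) = k + (m + 1) by ring]

lemma evol_le (k : ℤ) (m : ℕ) (hG : ∀ i : ℕ, i < m → Leaky A s η κ (G (k + i)))
    (f : S → ℝ) (c : ℝ) (hc : 0 ≤ c) (hf : ∀ a, f a ≤ c) (a : S) : evol G k m f a ≤ c := by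
  induction m generalizing k a with
  | zero => exact hf a
  | succ m ih =>
    have h0 : Leaky A s η κ (G k) := by simpa using hG 0 (by omega)
    have h1 : ∀ b, evol G (k + 1) m f b ≤ c := fun b => ih (k + 1) (fun i hi => by
      have := hG (i + 1) (by omega)
      push_cast at this
      rwa [show k + 1 + (i : ℤ) = k + (i + 1) by ring]) b
    calc evol G k (m + 1) f a = ∑ b, G k a b * evol G (k + 1) m f b := rfl
      _ ≤ ∑ b, G k a b * c :=
        Finset.sum_le_sum fun b _ => mul_le_mul_of_nonneg_left (h1 b) (h0.nonneg a b)
      _ = (∑ b, G k a b) * c := by rw [Finset.sum_mul]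
      _ ≤ 1 * c := mul_le_mul_of_nonneg_right (h0.row_le a) hc
      _ = c := one_mul c

/-- Mass lost at `s` propagates backwards along an admissible path leading to `s`. -/
lemma evol_path (j : ℕ) (k : ℤ) (hκ : 0 ≤ κ) (hη : 0 ≤ η)
    (hG : ∀ i : ℕ, i < j + 1 → Leaky A s η κ (G (k + i)))
    (f : S → ℝ) (c : ℝ) (hc : 0 ≤ c) (hf : ∀ a, f a ≤ c)
    (u : ℕ → S) (hu : u j = s) (hpath : ∀ i < j, A (u i) (u (i + 1)) = true) :
    evol G k (j + 1) f (u 0) ≤ (1 - η * κ ^ j) * c := by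
  induction j generalizing k u with
  | zero =>
    have h0 : Leaky A s η κ (G k) := by simpa using hG 0 (by omega)
    rw [hu]
    calc evol G k (0 + 1) f s = ∑ b, G k s b * f b := rfl
      _ ≤ ∑ b, G k s b * c :=
        Finset.sum_le_sum fun b _ => mul_le_mul_of_nonneg_left (hf b) (h0.nonneg s b)
      _ = (∑ b, G k s b) * c := by rw [Finset.sum_mul]
      _ ≤ (1 - η) * c := mul_le_mul_of_nonneg_right h0.row_s hc
      _ = _ := by ring
  | succ j ih =>
    have h0 : Leaky A s η κ (G k) := by simpa using hG 0 (by omega)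
    have hG' : ∀ i : ℕ, i < j + 1 → Leaky A s η κ (G (k + 1 + i)) := fun i hi => by
      have := hG (i + 1) (by omega)
      push_cast at this
      rwa [show k + 1 + (i : ℤ) = k + (i + 1) by ring]
    set v := evol G (k + 1) (j + 1) f with hv
    have h1 : ∀ b, v b ≤ c := fun b => evol_le (k + 1) (j + 1) hG' f c hc hf b
    have h2 : v (u 1) ≤ (1 - η * κ ^ j) * c :=
      ih (k + 1) hG' (fun i => u (i + 1)) hu (fun i hi => hpath (i + 1) (by omega))
    have h3 : κ ≤ G k (u 0) (u 1) := h0.edge _ _ (hpath 0 (by omega))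
    have h4 : G k (u 0) (u 1) * (c - v (u 1)) ≤ ∑ b, G k (u 0) b * (c - v b) :=
      Finset.single_le_sum (f := fun b => G k (u 0) b * (c - v b))
        (fun b _ => mul_nonneg (h0.nonneg _ b) (sub_nonneg.2 (h1 b))) (Finset.mem_univ (u 1))
    have h5 : κ * (η * κ ^ j * c) ≤ G k (u 0) (u 1) * (c - v (u 1)) :=
      mul_le_mul h3 (by linarith) (by positivity) (h0.nonneg _ _)
    have h6 : ∑ b, G k (u 0) b * (c - v b)
        = (∑ b, G k (u 0) b) * c - ∑ b, G k (u 0) b * v b := by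
      simp only [mul_sub, Finset.sum_sub_distrib, Finset.sum_mul]
    have h7 := mul_le_mul_of_nonneg_right (h0.row_le (u 0)) hc
    change ∑ b, G k (u 0) b * v b ≤ _
    have h8 : (1 - η * κ ^ (j + 1)) * c = c - κ * (η * κ ^ j * c) := by ring
    linarith

lemma evol_block (M : ℕ) (hM : ∀ a t : S, ∃ u : ℕ → S,
      u 0 = a ∧ u M = t ∧ ∀ i < M, A (u i) (u (i + 1)) = true)
    (hκ : 0 ≤ κ) (hκ1 : κ ≤ 1) (hη : 0 ≤ η) (hη1 : η ≤ 1) (q r : ℕ) (k : ℤ)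
    (hG : ∀ i : ℕ, i < (M + 1) * q + r → Leaky A s η κ (G (k + i))) (a : S) :
    evol G k ((M + 1) * q + r) (fun _ => 1) a ≤ (1 - η * κ ^ M) ^ q := by
  have hρ : 0 ≤ 1 - η * κ ^ M :=
    sub_nonneg.2 (mul_le_one₀ hη1 (by positivity) (pow_le_one₀ hκ hκ1))
  induction q generalizing k a with
  | zero => exact evol_le k _ hG _ _ (by simp) (by simp) a
  | succ q ih =>
    obtain ⟨u, rfl, hu, hp⟩ := hM a s
    have e : (M + 1) * (q + 1) + r = (M + 1) + ((M + 1) * q + r) := by ring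
    rw [e, evol_add, pow_succ']
    refine evol_path M k hκ hη (fun i hi => hG i (by omega)) _ _ (by positivity) ?_ u hu hp
    intro b
    refine ih _ (fun i hi => ?_) b
    have := hG (M + 1 + i) (by omega)
    push_cast at this ⊢
    rwa [add_assoc]

/-- Summing a product of kernels over all words of length `m + 1` amounts to applying the kernels
successively. -/
lemma sum_words (F : S → ℝ) (k : ℤ) (m : ℕ) :
    ∑ w : Fin (m + 1) → S, F (w 0) * ∏ i : Fin m, G (k + ((i : ℕ) : ℤ)) (w i.castSucc) (w i.succ)
      = ∑ a, F a * evol G k m (fun _ => 1) a := by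
  induction m generalizing F k with
  | zero =>
    simp only [Finset.univ_eq_empty, Finset.prod_empty, evol]
    exact Fintype.sum_equiv (Equiv.funUnique (Fin 1) S) _ _ (fun w => rfl)
  | succ m ih =>
    rw [← (Fin.consEquiv (fun _ : Fin (m + 2) => S)).sum_comp, Fintype.sum_prod_type]
    refine Finset.sum_congr rfl fun a _ => ?_
    have := ih (fun b => F a * G k a b) (k + 1)
    simp only [evol, Finset.mul_sum, ← mul_assoc]
    rw [← this]
    refine Finset.sum_congr rfl fun w _ => ?_
    rw [Fin.prod_univ_succ]
    simp only [Fin.consEquiv_apply, Fin.cons_zero, Fin.castSucc_zero, Fin.cons_succ,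
      Fin.val_zero, Fin.val_succ, Fin.castSucc_succ]
    push_cast
    simp only [add_zero, mul_assoc, add_assoc, add_comm (1 : ℤ)]

end Evol

/-! ### Large deviations -/

lemma exp_le_quadratic {y : ℝ} (hy : |y| ≤ 1) : Real.exp y ≤ 1 + y + y ^ 2 := by
  have := (abs_le.1 (Real.abs_exp_sub_one_sub_id_le hy)).2
  linarith

/-- Exponentially tilting a transition matrix by `ε / 2 * φ`, where `φ` vanishes off the row `s` and
has drift at most `-ε` there, makes it lose mass at `s`. -/
lemma leaky_tilt {S : Type*} [Fintype S] {A : S → S → Bool} {s : S} {R : S → S → ℝ}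
    (hR : IsStochastic R) {δ : ℝ} (hRA : ∀ a b, A a b = true → δ ≤ R a b)
    {φ : S → S → ℝ} (hφ : ∀ a b, |φ a b| ≤ 1) (hφ0 : ∀ a b, a ≠ s → φ a b = 0)
    {ε : ℝ} (hε : 0 < ε) (hε1 : ε ≤ 1) (hdrift : ∑ b, R s b * φ s b ≤ -ε) :
    Leaky A s (ε ^ 2 / 4) (δ * Real.exp (-1)) (fun a b => R a b * Real.exp (ε / 2 * φ a b)) := by
  have hs : ∑ b, R s b * Real.exp (ε / 2 * φ s b) ≤ 1 - ε ^ 2 / 4 := by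
    have hb : ∀ b, R s b * Real.exp (ε / 2 * φ s b)
        ≤ R s b + ε / 2 * (R s b * φ s b) + R s b * (ε ^ 2 / 4) := by
      intro b
      have h1 := abs_le.1 (hφ s b)
      have h2 : Real.exp (ε / 2 * φ s b) ≤ 1 + ε / 2 * φ s b + (ε / 2 * φ s b) ^ 2 := by
        apply exp_le_quadratic
        rw [abs_mul, abs_of_pos (by positivity)]
        have := hφ s b
        have h0 := abs_nonneg (φ s b)
        nlinarith
      have h3 : (φ s b) ^ 2 ≤ 1 := by nlinarith
      have h4 : Real.exp (ε / 2 * φ s b) ≤ 1 + ε / 2 * φ s b + ε ^ 2 / 4 := by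
        nlinarith [sq_nonneg ε]
      have := mul_le_mul_of_nonneg_left h4 (hR.1 s b)
      linarith
    calc _ ≤ ∑ b, (R s b + ε / 2 * (R s b * φ s b) + R s b * (ε ^ 2 / 4)) :=
          Finset.sum_le_sum fun b _ => hb b
      _ = 1 + ε / 2 * (∑ b, R s b * φ s b) + ε ^ 2 / 4 := by
          rw [Finset.sum_add_distrib, Finset.sum_add_distrib, ← Finset.mul_sum, ← Finset.sum_mul,
            hR.2 s, one_mul]
      _ ≤ _ := by nlinarith
  refine ⟨fun a b => mul_nonneg (hR.1 a b) (Real.exp_pos _).le, fun a => ?_, hs, fun a b h => ?_⟩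
  · by_cases h : a = s
    · subst h
      linarith [sq_nonneg ε]
    · simp [hφ0 a _ h, hR.2 a]
  · refine mul_le_mul (hRA a b h) (Real.exp_le_exp.2 ?_) (Real.exp_pos _).le (hR.1 a b)
    have := abs_le.1 (hφ a b)
    nlinarith

/-- The sum of `φ (x j) (x (j + 1))` over the window `k ≤ j < k + m`. -/
def windowSum {S : Type*} (φ : S → S → ℝ) (k : ℤ) (m : ℕ) (x : Seq S) : ℝ :=
  ∑ i : Fin m, φ (x (k + ((i : ℕ) : ℤ))) (x (k + ((i : ℕ) : ℤ) + 1))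

lemma measurable_windowSum {S : Type*} [Fintype S] [MeasurableSpace S]
    [MeasurableSingletonClass S] (φ : S → S → ℝ) (k : ℤ) (m : ℕ) :
    Measurable (windowSum φ k m) := by
  unfold windowSum
  refine Finset.measurable_sum _ fun i _ => ?_
  have h : Measurable (fun p : S × S => φ p.1 p.2) := Measurable.of_discrete
  have h' : Measurable (fun x : Seq S => (x (k + ((i : ℕ) : ℤ)), x (k + ((i : ℕ) : ℤ) + 1))) :=
    (measurable_pi_apply _).prodMk (measurable_pi_apply _)
  exact h.comp h'

lemma windowSum_shiftZ {S : Type*} (φ : S → S → ℝ) (k n : ℤ) (m : ℕ) (x : Seq S) :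
    windowSum φ k m (shiftZ n x) = windowSum φ (k + n) m x := by
  unfold windowSum shiftZ
  refine Finset.sum_congr rfl fun i _ => ?_
  congr 2 <;> ring

lemma shiftMap_iterate {S : Type*} (n : ℕ) (x : Seq S) : shiftMap^[n] x = shiftZ (n : ℤ) x := by
  induction n with
  | zero => funext k; simp [shiftZ]
  | succ n ih =>
    rw [Function.iterate_succ_apply', ih]
    funext k
    simp only [shiftMap, shiftZ]
    congr 1
    push_cast
    ring

/-- Chernoff's bound for window sums, with the exponential moment written through `evol`. -/
lemma measure_windowSum_le {S : Type*} [Fintype S] [MeasurableSpace S]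
    {A : S → S → Bool} {P : ℤ → S → S → ℝ} {π : ℤ → S → ℝ} {μ : Measure (Seq S)}
    (hμ : IsMarkovMeasure μ A P π) (φ : S → S → ℝ) {l : ℝ} (hl : 0 ≤ l) (k : ℤ) (m : ℕ) (c : ℝ)
    (hc : ∀ a, evol (fun j a b => P j a b * Real.exp (l * φ a b)) k m (fun _ => 1) a ≤ c) :
    μ {x | 0 ≤ windowSum φ k m x} ≤ ENNReal.ofReal c := by
  classical
  let cyl : (Fin (m + 1) → S) → Set (Seq S) := fun w =>
    {x | ∀ i : Fin (m + 1), x (k - 1 + 1 + ((i : ℕ) : ℤ)) = w i}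
  let T : (Fin (m + 1) → S) → ℝ := fun w => ∑ i : Fin m, φ (w i.castSucc) (w i.succ)
  let g : (Fin (m + 1) → S) → ℝ := fun w => π k (w 0) *
    ∏ i : Fin m, (P (k + ((i : ℕ) : ℤ)) (w i.castSucc) (w i.succ)
      * Real.exp (l * φ (w i.castSucc) (w i.succ)))
  have hg : ∀ w, 0 ≤ g w := fun w => mul_nonneg (hμ.dist_nonneg _ _)
    (Finset.prod_nonneg fun i _ => mul_nonneg ((hμ.stochastic _).1 _ _) (Real.exp_pos _).le)
  have hsub : {x | 0 ≤ windowSum φ k m x}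
      ⊆ ⋃ w ∈ (Finset.univ.filter fun w => 0 ≤ T w), cyl w := by
    intro x hx
    simp only [Set.mem_iUnion]
    refine ⟨fun i => x (k + ((i : ℕ) : ℤ)), ?_, ?_⟩
    · simp only [Finset.mem_filter, Finset.mem_univ, true_and, T]
      have hx' : 0 ≤ windowSum φ k m x := hx
      simpa [windowSum, add_assoc] using hx'
    · simp [cyl]
  have hcyl : ∀ w, 0 ≤ T w → μ (cyl w) ≤ ENNReal.ofReal (g w) := by
    intro w hw
    rw [show μ (cyl w) = _ from hμ.cylinder (k - 1) m w, sub_add_cancel]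
    refine ENNReal.ofReal_le_ofReal (mul_le_mul_of_nonneg_left ?_ (hμ.dist_nonneg _ _))
    rw [Finset.prod_mul_distrib, ← Real.exp_sum, ← Finset.mul_sum]
    exact le_mul_of_one_le_right (Finset.prod_nonneg fun i _ => (hμ.stochastic _).1 _ _)
      (Real.one_le_exp (mul_nonneg hl hw))
  calc μ {x | 0 ≤ windowSum φ k m x}
      ≤ ∑ w ∈ (Finset.univ.filter fun w => 0 ≤ T w), μ (cyl w) :=
        (measure_mono hsub).trans (measure_biUnion_finset_le _ _)
    _ ≤ ∑ w ∈ (Finset.univ.filter fun w => 0 ≤ T w), ENNReal.ofReal (g w) :=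
        Finset.sum_le_sum fun w hw => hcyl w (Finset.mem_filter.1 hw).2
    _ ≤ ∑ w, ENNReal.ofReal (g w) := Finset.sum_le_sum_of_subset (Finset.filter_subset _ _)
    _ = ENNReal.ofReal (∑ w, g w) := (ENNReal.ofReal_sum_of_nonneg fun w _ => hg w).symm
    _ ≤ ENNReal.ofReal c := by
        refine ENNReal.ofReal_le_ofReal ?_
        rw [sum_words (G := fun j a b => P j a b * Real.exp (l * φ a b)) (π k) k m]
        calc _ ≤ ∑ a, π k a * c :=
              Finset.sum_le_sum fun a _ => mul_le_mul_of_nonneg_left (hc a) (hμ.dist_nonneg _ _)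
          _ = c := by rw [← Finset.sum_mul, hμ.dist_sum, one_mul]

lemma summable_pow_div {ρ : ℝ} (h0 : 0 ≤ ρ) (h1 : ρ < 1) (L : ℕ) :
    Summable fun m : ℕ => ρ ^ (m / (L + 1)) := by
  rw [← (Nat.divModEquiv (L + 1)).symm.summable_iff]
  have h : (fun m : ℕ => ρ ^ (m / (L + 1))) ∘ (Nat.divModEquiv (L + 1)).symm
      = fun p : ℕ × Fin (L + 1) => ρ ^ p.1 * 1 := by
    funext p
    have : (p.1 * (L + 1) + (p.2 : ℕ)) / (L + 1) = p.1 := by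
      rw [mul_comm, Nat.mul_add_div (by omega), Nat.div_eq_of_lt p.2.2, add_zero]
    simp [Nat.divModEquiv, this]
  rw [h]
  exact (summable_geometric_of_lt_one h0 h1).mul_of_nonneg
    (Summable.of_finite (f := fun _ : Fin (L + 1) => (1 : ℝ))) (fun n => pow_nonneg h0 n)
    (fun _ => zero_le_one)

/-- Window sums of a function with drift at most `-ε` are nonnegative with summable probability,
uniformly in the position of the window. -/
lemma exists_summable_bound {S : Type*} [Fintype S] [MeasurableSpace S]
    {A : S → S → Bool} (hA : IsPrimitive A) {P : ℤ → S → S → ℝ} {π : ℤ → S → ℝ}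
    {μ : Measure (Seq S)} (hμ : IsMarkovMeasure μ A P π) (hD : Doeblin A P) (s : S)
    (φ : S → S → ℝ) (hφ : ∀ a b, |φ a b| ≤ 1) (hφ0 : ∀ a b, a ≠ s → φ a b = 0)
    {ε : ℝ} (hε : 0 < ε) (hε1 : ε ≤ 1) :
    ∃ B : ℕ → ℝ, Summable B ∧ ∀ (k : ℤ) (m : ℕ),
      (∀ i : ℕ, i < m → ∑ b, P (k + i) s b * φ s b ≤ -ε) →
        μ {x | 0 ≤ windowSum φ k m x} ≤ ENNReal.ofReal (B m) := by
  obtain ⟨M, -, hM⟩ := hA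
  obtain ⟨δ, hδ, hδA⟩ := hD
  set κ := min δ 1 * Real.exp (-1) with hκ
  have hδ' : 0 < min δ 1 := lt_min hδ one_pos
  have hκ0 : 0 < κ := mul_pos hδ' (Real.exp_pos _)
  have hκ1 : κ ≤ 1 :=
    mul_le_one₀ (min_le_right _ _) (Real.exp_pos _).le (Real.exp_le_one_iff.2 (by norm_num))
  set η := ε ^ 2 / 4 with hη
  have hη0 : 0 < η := by positivity
  have hη1 : η ≤ 1 := by nlinarith
  have hρ0 : 0 ≤ 1 - η * κ ^ M :=
    sub_nonneg.2 (mul_le_one₀ hη1 (by positivity) (pow_le_one₀ hκ0.le hκ1))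
  have hρ1 : 1 - η * κ ^ M < 1 := by
    have : 0 < η * κ ^ M := by positivity
    linarith
  refine ⟨fun m => (1 - η * κ ^ M) ^ (m / (M + 1)), summable_pow_div hρ0 hρ1 M, ?_⟩
  intro k m hdrift
  refine measure_windowSum_le hμ φ (l := ε / 2) (by positivity) k m _ fun a => ?_
  have hm : (M + 1) * (m / (M + 1)) + m % (M + 1) = m := Nat.div_add_mod m (M + 1)
  have := evol_block (s := s) (G := fun j a b => P j a b * Real.exp (ε / 2 * φ a b)) M hM hκ0.le hκ1
    hη0.le hη1 (m / (M + 1)) (m % (M + 1)) k (fun i hi => leaky_tilt (hμ.stochastic _)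
      (fun a b h => (min_le_left _ _).trans ((hδA _ a b).2 h)) hφ hφ0 hε hε1
      (hdrift i (hm ▸ hi))) a
  rwa [hm] at this

/-! ### Recurrence -/

/-- A conservative nonsingular shift admits no function whose sums over windows far to the
right are negative, and over windows far to the left positive, except with summable probability. -/
lemma false_of_windowSum_sign {S : Type*} [Fintype S] [MeasurableSpace S]
    [MeasurableSingletonClass S] {μ : Measure (Seq S)} [IsProbabilityMeasure μ]
    (hns : ShiftNonsingular μ) (hcons : ShiftConservative μ) (φ : S → S → ℝ) (K : ℕ)
    (B₁ B₂ : ℕ → ℝ) (hB₁ : Summable B₁) (hB₂ : Summable B₂)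
    (h₁ : ∀ m : ℕ, μ {x | 0 ≤ windowSum φ K m x} ≤ ENNReal.ofReal (B₁ m))
    (h₂ : ∀ m : ℕ, μ {x | windowSum φ (-K - m) m x ≤ 0} ≤ ENNReal.ofReal (B₂ m)) : False := by
  have hT : Measurable (shiftMap (S := S)) :=
    measurable_pi_lambda _ fun k => measurable_pi_apply _
  have hC : Conservative (shiftMap (S := S)) μ := by
    refine ⟨⟨hT, hns.1⟩, fun E hE hE0 => ?_⟩
    obtain ⟨n, hn, hpos⟩ := hcons E hE (pos_iff_ne_zero.2 hE0)
    obtain ⟨x, hx, hx'⟩ := nonempty_of_measure_ne_zero hpos.ne'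
    exact ⟨x, hx, n, by omega, hx'⟩
  have ae₁ : ∀ᵐ x ∂μ, ∀ᶠ m in atTop, ¬ (0 ≤ windowSum φ K m x) :=
    ae_eventually_notMem (s := fun m : ℕ => {x | 0 ≤ windowSum φ K m x})
      (ne_top_of_le_ne_top hB₁.tsum_ofReal_ne_top (ENNReal.tsum_le_tsum h₁))
  have ae₂ : ∀ᵐ x ∂μ, ∀ᶠ m : ℕ in atTop, ¬ (windowSum φ (-K - m) m x ≤ 0) :=
    ae_eventually_notMem (s := fun m : ℕ => {x | windowSum φ (-K - m) m x ≤ 0})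
      (ne_top_of_le_ne_top hB₂.tsum_ofReal_ne_top (ENNReal.tsum_le_tsum h₂))
  let E : ℕ → Set (Seq S) := fun N =>
    ⋂ m : ℕ, ⋂ _ : N ≤ m, {x | windowSum φ K m x < 0} ∩ {x | 0 < windowSum φ (-K - m) m x}
  have hE : ∀ N, MeasurableSet (E N) := fun N => by
    refine MeasurableSet.iInter fun m => MeasurableSet.iInter fun _ => MeasurableSet.inter ?_ ?_
    · exact measurableSet_lt (measurable_windowSum _ _ _) measurable_const
    · exact measurableSet_lt measurable_const (measurable_windowSum _ _ _)
  obtain ⟨N, hN⟩ : ∃ N, μ (E N) ≠ 0 := by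
    by_contra! hcon
    have h0 : ∀ᵐ x ∂μ, ∀ N, x ∉ E N := ae_all_iff.2 fun N => measure_eq_zero_iff_ae_notMem.1 (hcon N)
    obtain ⟨x, hx1, hx2, hx3⟩ := (ae₁.and (ae₂.and h0)).exists
    obtain ⟨N, hN⟩ := eventually_atTop.1 (hx1.and hx2)
    refine hx3 N ?_
    simp only [E, Set.mem_iInter]
    exact fun m hm => ⟨not_le.1 (hN m hm).1, not_le.1 (hN m hm).2⟩
  obtain ⟨n, hn, hn0⟩ := (frequently_atTop.1
    (hC.frequently_measure_inter_ne_zero (hE N).nullMeasurableSet hN)) (N + 2 * K)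
  obtain ⟨x, hx, hx'⟩ := nonempty_of_measure_ne_zero hn0
  obtain ⟨m, rfl⟩ : ∃ m, n = m + 2 * K := ⟨n - 2 * K, by omega⟩
  simp only [E, Set.mem_iInter, Set.mem_preimage, shiftMap_iterate] at hx hx'
  have e₁ : windowSum φ K m x < 0 := (hx m (by omega)).1
  have e₂ : 0 < windowSum φ (-K - m) m (shiftZ ((m + 2 * K : ℕ) : ℤ) x) := (hx' m (by omega)).2
  rw [windowSum_shiftZ, show (-K - m + ((m + 2 * K : ℕ) : ℤ) : ℤ) = K by push_cast; ring] at e₂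
  exact lt_asymm e₁ e₂

/-- **Theorem C (necessary condition for conservativeness).**
If the shift is nonsingular and conservative with respect to a Markov measure on a
topologically mixing SFT with the Doeblin condition, and both limits
`lim_{n→∞} P_n` and `lim_{n→∞} P_{-n}` exist, then they are equal. -/
theorem limits_eq_of_conservative
    {S : Type*} [Fintype S] [MeasurableSpace S] [MeasurableSingletonClass S]
    (A : S → S → Bool) (hA : IsPrimitive A)
    (P : ℤ → S → S → ℝ) (π : ℤ → S → ℝ) (μ : Measure (Seq S))
    (hμ : IsMarkovMeasure μ A P π) (hD : Doeblin A P)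
    (hns : ShiftNonsingular μ) (hcons : ShiftConservative μ)
    (Q₁ Q₂ : S → S → ℝ)
    (hQ₁ : Tendsto (fun n : ℕ => P (n : ℤ)) atTop (𝓝 Q₁))
    (hQ₂ : Tendsto (fun n : ℕ => P (-(n : ℤ))) atTop (𝓝 Q₂)) :
    Q₁ = Q₂ := by
  classical
  have := hμ.isProb
  by_contra hne
  obtain ⟨s, t, hst⟩ : ∃ s t, Q₁ s t ≠ Q₂ s t := by
    by_contra! h
    exact hne (funext₂ h)
  have t₁ : Tendsto (fun n : ℕ => P (n : ℤ) s t) atTop (𝓝 (Q₁ s t)) :=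
    tendsto_pi_nhds.1 (tendsto_pi_nhds.1 hQ₁ s) t
  have t₂ : Tendsto (fun n : ℕ => P (-(n : ℤ)) s t) atTop (𝓝 (Q₂ s t)) :=
    tendsto_pi_nhds.1 (tendsto_pi_nhds.1 hQ₂ s) t
  have hP0 : ∀ n, 0 ≤ P n s t := fun n => (hμ.stochastic n).1 s t
  have hP1 : ∀ n, P n s t ≤ 1 := fun n => by
    rw [← (hμ.stochastic n).2 s]
    exact Finset.single_le_sum (fun b _ => (hμ.stochastic n).1 s b) (Finset.mem_univ t)
  have q₁0 : 0 ≤ Q₁ s t := ge_of_tendsto' t₁ fun n => hP0 _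
  have q₁1 : Q₁ s t ≤ 1 := le_of_tendsto' t₁ fun n => hP1 _
  have q₂0 : 0 ≤ Q₂ s t := ge_of_tendsto' t₂ fun n => hP0 _
  have q₂1 : Q₂ s t ≤ 1 := le_of_tendsto' t₂ fun n => hP1 _
  obtain ⟨σ, hσ, hσpos⟩ : ∃ σ : ℝ, |σ| = 1 ∧ 0 < σ * (Q₂ s t - Q₁ s t) := by
    rcases lt_or_gt_of_ne hst with h | h
    · exact ⟨1, by simp, by linarith⟩
    · exact ⟨-1, by simp, by linarith⟩
  set c := (Q₁ s t + Q₂ s t) / 2 with hc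
  -- The drifts in the two limits are `∓ 2 * ε`.
  set ε := σ * (Q₂ s t - Q₁ s t) / 4 with hε
  have hε0 : 0 < ε := by positivity
  have hε1 : ε ≤ 1 := by
    have h1 : σ * (Q₂ s t - Q₁ s t) ≤ |σ * (Q₂ s t - Q₁ s t)| := le_abs_self _
    rw [abs_mul, hσ, one_mul] at h1
    have h2 : |Q₂ s t - Q₁ s t| ≤ 1 := abs_le.2 ⟨by linarith, by linarith⟩
    linarith
  let φ : S → S → ℝ := fun a b => if a = s then σ * ((if b = t then 1 else 0) - c) else 0
  have hφ : ∀ a b, |φ a b| ≤ 1 := by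
    intro a b
    by_cases ha : a = s
    · simp only [φ, if_pos ha, abs_mul, hσ, one_mul]
      split_ifs <;> exact abs_le.2 ⟨by linarith, by linarith⟩
    · simp [φ, ha]
  have hφ0 : ∀ a b, a ≠ s → φ a b = 0 := fun a b h => by simp [φ, h]
  have hdrift : ∀ n, ∑ b, P n s b * φ s b = σ * (P n s t - c) := by
    intro n
    have : ∀ b, P n s b * φ s b = σ * ((if b = t then P n s b else 0) - P n s b * c) := by
      intro b
      by_cases hb : b = t <;> simp [φ, hb] <;> ring
    simp only [this, ← Finset.mul_sum, Finset.sum_sub_distrib, ← Finset.sum_mul,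
      (hμ.stochastic n).2 s, one_mul]
    simp
  have ev₁ : ∀ᶠ n : ℕ in atTop, σ * (P (n : ℤ) s t - c) < -ε :=
    ((t₁.sub_const c).const_mul σ).eventually_lt_const (by rw [hc, hε] at *; linarith)
  have ev₂ : ∀ᶠ n : ℕ in atTop, ε < σ * (P (-(n : ℤ)) s t - c) :=
    ((t₂.sub_const c).const_mul σ).eventually_const_lt (by rw [hc, hε] at *; linarith)
  obtain ⟨K, hK⟩ := eventually_atTop.1 (ev₁.and ev₂)
  obtain ⟨B₁, hB₁, hb₁⟩ := exists_summable_bound hA hμ hD s φ hφ hφ0 hε0 hε1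
  obtain ⟨B₂, hB₂, hb₂⟩ := exists_summable_bound hA hμ hD s (fun a b => -φ a b)
    (fun a b => by rw [abs_neg]; exact hφ a b) (fun a b h => by rw [hφ0 a b h, neg_zero]) hε0 hε1
  refine false_of_windowSum_sign hns hcons φ K B₁ B₂ hB₁ hB₂ (fun m => ?_) (fun m => ?_)
  · refine hb₁ K m fun i _ => ?_
    rw [hdrift]
    have := (hK (K + i) (by omega)).1
    push_cast at this
    exact this.le
  · have h := hb₂ (-K - m) m fun i hi => by
      simp only [mul_neg, Finset.sum_neg_distrib]
      rw [hdrift, neg_le_neg_iff]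
      have := (hK (K + (m - i)) (by omega)).2
      rw [show (-((K + (m - i) : ℕ) : ℤ)) = -K - m + i by omega] at this
      exact this.le
    refine le_trans (measure_mono fun x hx => ?_) h
    have hx' : windowSum φ (-K - m) m x ≤ 0 := hx
    simp only [windowSum, Finset.sum_neg_distrib, Set.mem_ofPred_eq] at hx' ⊢
    linarith

end MarkovSFT
end

section
/- Let Γ be a countable group of nonsingular automorphisms of a standard Borel probability space (X,μ). Then e(Γ) = ℝ if and only if every Γ̃-invariant function F ∈ L^∞(X̃, μ̃) of the Maharam extension is of the form F(x,t) = f(x) for μ̃-a.e. (x,t) ∈ X̃, for some function f on X. -/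
/-!
Write `γ̃ (x, t) = (γ x, t - φ γ x)` for the Maharam extension.

*Essential values force invariant functions to depend on `x` only.* Let `F` be bounded and
invariant. Its integrals `fiberIntegral F s t x = ∫ u in s..t, F (x, u)` satisfy, for a.e. `x`
and all `γ`, `s`, `t`, `fiberIntegral F (s - φ γ x) (t - φ γ x) (γ x) = fiberIntegral F s t x`,
and they depend on the endpoints in a Lipschitz way, uniformly in `x`. If for some `r` a
translation of the interval by `r` increased the integral on a set of positive measure, there
would be `p < q` such that the set `E` where the integral over `[s, t]` is `< p` and the one over
`[s + r, t + r]` is `> q` has positive measure. A partial isomorphism `V` within orbits with `x`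
and `V x` in `E` and with log-derivative close to `r` gives a contradiction (the log-derivative
of `V` agrees a.e. with the `φ γ` by which `V` is realised). Hence the integrals are translation
invariant (`ae_fiberIntegral_translate`), so `t ↦ fiberIntegral F 0 t x` is additive and
continuous, hence linear, and by Lebesgue differentiation `F (x, ·)` is a.e. constant.

*Converse.* Given `E` of positive measure, `r` and `ε`, the saturation
`B = {p | ∃ γ, γ̃ p ∈ E × (-ε/2, ε/2)}` is invariant by the chain rule for `φ`
(`ae_logDeriv_mul`), so its indicator depends only on `x`. As `B ⊇ E × (-ε/2, ε/2)`, for a.e.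
`x ∈ E` almost the whole fibre over `x` lies in `B`; a point `(x, t) ∈ B` with `|t - r| < ε/2`
yields `γ` with `γ x ∈ E` and `|φ γ x - r| < ε`. One `γ` serves a set of positive measure, and
`R γ` itself is the required partial isomorphism.
-/

open MeasureTheory Filter Topology

namespace MaharamLemma

variable {X : Type*}

/-- `φ` is (a version of) `log dμ∘f/dμ` on the set `D`:
`μ(f(E)) = ∫_E e^{φ} dμ` for every measurable `E ⊆ D`. -/
def IsLogDeriv [MeasurableSpace X] (μ : Measure X) (f : X → X) (D : Set X)
    (φ : X → ℝ) : Prop :=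
  ∀ E : Set X, E ⊆ D → MeasurableSet E →
    μ (f '' E) = ∫⁻ x in E, ENNReal.ofReal (Real.exp (φ x)) ∂μ

/-- A nonsingular partial isomorphism of `(X, μ)` together with (a version of) the
logarithm of its Radon–Nikodym derivative. -/
structure PartialIso [MeasurableSpace X] (μ : Measure X) where
  dom : Set X
  toFun : X → X
  logDeriv : X → ℝ
  meas_dom : MeasurableSet dom
  meas_toFun : Measurable toFun
  meas_logDeriv : Measurable logDeriv
  injOn : Set.InjOn toFun dom
  deriv_spec : IsLogDeriv μ toFun dom logDeriv

/-- `r` is an essential value of the Radon–Nikodym cocycle of the equivalence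
relation whose orbits are described by `Orb`. -/
def IsEssentialValueFor [MeasurableSpace X] (μ : Measure X)
    (Orb : X → X → Prop) (r : ℝ) : Prop :=
  ∀ E : Set X, MeasurableSet E → 0 < μ E → ∀ ε : ℝ, 0 < ε →
    ∃ g : PartialIso μ,
      (∀ᵐ x ∂μ.restrict g.dom, Orb x (g.toFun x)) ∧
      0 < μ (E ∩ g.dom ∩ g.toFun ⁻¹' E ∩ {x | |g.logDeriv x - r| < ε})

/-- The measure `μ̃` of the Maharam extension on `X × ℝ`:
`dμ̃(x,t) = dμ(x) eᵗ dt`. -/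
noncomputable def maharamMeasure [MeasurableSpace X] (μ : Measure X) :
    Measure (X × ℝ) :=
  μ.prod (MeasureTheory.volume.withDensity fun t => ENNReal.ofReal (Real.exp t))

/-- The Maharam extension of a nonsingular map `f` with log Radon–Nikodym
derivative `φ`: `(x, t) ↦ (f x, t - φ x)`. -/
def maharamMap (f : X → X) (φ : X → ℝ) : X × ℝ → X × ℝ :=
  fun p => (f p.1, p.2 - φ p.1)

section Helpers

variable [MeasurableSpace X]

/-! ### Radon–Nikodym derivatives -/

/-- Log-derivatives are determined almost everywhere by their exponential integrals. -/
lemma ae_eq_of_setLIntegral_exp_eq (μ : Measure X) [IsFiniteMeasure μ] {D : Set X}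
    (hD : MeasurableSet D) {a b : X → ℝ} (ha : Measurable a) (hb : Measurable b)
    (h : ∀ E ⊆ D, MeasurableSet E → ∫⁻ x in E, ENNReal.ofReal (Real.exp (a x)) ∂μ =
      ∫⁻ x in E, ENNReal.ofReal (Real.exp (b x)) ∂μ) :
    ∀ᵐ x ∂μ, x ∈ D → a x = b x := by
  rw [← ae_restrict_iff' hD]
  have key : (fun x => ENNReal.ofReal (Real.exp (a x))) =ᵐ[μ.restrict D]
      fun x => ENNReal.ofReal (Real.exp (b x)) := by
    refine ae_eq_of_forall_setLIntegral_eq_of_sigmaFinite (by fun_prop) (by fun_prop) ?_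
    intro s hs _
    rw [Measure.restrict_restrict hs]
    exact h _ Set.inter_subset_right (hs.inter hD)
  filter_upwards [key] with x hx
  rw [ENNReal.ofReal_eq_ofReal_iff (Real.exp_nonneg _) (Real.exp_nonneg _)] at hx
  exact Real.exp_injective hx

/-- Almost everywhere on its domain, a partial isomorphism that moves points within orbits has
the log-derivative of a group element realising it at that point. -/
lemma PartialIso.ae_exists_logDeriv_eq [StandardBorelSpace X] {Γ : Type*} [Countable Γ]
    (μ : Measure X) [IsFiniteMeasure μ] (R : Γ → X → X) (φ : Γ → X → ℝ)
    (hRmeas : ∀ γ, Measurable (R γ)) (hφmeas : ∀ γ, Measurable (φ γ))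
    (hφ : ∀ γ : Γ, IsLogDeriv μ (R γ) Set.univ (φ γ)) (g : PartialIso μ)
    (hg : ∀ᵐ x ∂μ.restrict g.dom, ∃ γ : Γ, g.toFun x = R γ x) :
    ∀ᵐ x ∂μ, x ∈ g.dom → ∃ γ : Γ, g.toFun x = R γ x ∧ g.logDeriv x = φ γ x := by
  have hmeas : ∀ γ, MeasurableSet (g.dom ∩ {x | g.toFun x = R γ x}) := fun γ =>
    g.meas_dom.inter (measurableSet_eq_fun g.meas_toFun (hRmeas γ))
  have h1 : ∀ᵐ x ∂μ, ∀ γ, x ∈ g.dom ∩ {x | g.toFun x = R γ x} → g.logDeriv x = φ γ x := by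
    rw [ae_all_iff]
    intro γ
    refine ae_eq_of_setLIntegral_exp_eq μ (hmeas γ) g.meas_logDeriv (hφmeas γ) ?_
    intro E hE hEm
    rw [← g.deriv_spec E (fun x hx => (hE hx).1) hEm, ← hφ γ E (Set.subset_univ _) hEm]
    congr 1
    exact Set.image_congr fun x hx => (hE hx).2
  rw [ae_restrict_iff' g.meas_dom] at hg
  filter_upwards [h1, hg] with x hx1 hx2 hxd
  obtain ⟨γ, hγ⟩ := hx2 hxd
  exact ⟨γ, hγ, hx1 γ ⟨hxd, hγ⟩⟩

/-- The chain rule for the Radon–Nikodym cocycle of the action. -/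
lemma ae_logDeriv_mul {Γ : Type*} [Group Γ] (μ : Measure X) [IsFiniteMeasure μ]
    (R : Γ → X → X) (φ : Γ → X → ℝ) (hRmeas : ∀ γ, Measurable (R γ)) (hR1 : R 1 = id)
    (hRmul : ∀ γ δ : Γ, R (γ * δ) = R γ ∘ R δ) (hφmeas : ∀ γ, Measurable (φ γ))
    (hφ : ∀ γ : Γ, IsLogDeriv μ (R γ) Set.univ (φ γ)) (γ δ : Γ) :
    ∀ᵐ x ∂μ, φ (γ * δ) x = φ γ (R δ x) + φ δ x := by
  have hl : ∀ x, R δ⁻¹ (R δ x) = x := fun x => by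
    have := congrFun (hRmul δ⁻¹ δ) x
    simpa [hR1] using this.symm
  have hr : ∀ x, R δ (R δ⁻¹ x) = x := fun x => by
    have := congrFun (hRmul δ δ⁻¹) x
    simpa [hR1] using this.symm
  have himg : ∀ E, R δ '' E = R δ⁻¹ ⁻¹' E := fun E =>
    congrFun (Set.image_eq_preimage_of_inverse hl hr) E
  have hpre : ∀ E, R δ ⁻¹' (R δ '' E) = E := fun E =>
    Set.preimage_image_eq E (Function.LeftInverse.injective hl)
  -- The measure with density `exp (φ δ)` is pushed forward by `R δ` to `μ`.
  have hmap : (μ.withDensity fun x => ENNReal.ofReal (Real.exp (φ δ x))).map (R δ) = μ := by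
    ext E hE
    rw [Measure.map_apply (hRmeas δ) hE, withDensity_apply _ (hRmeas δ hE),
      ← hφ δ _ (Set.subset_univ _) (hRmeas δ hE),
      Set.image_preimage_eq E (Function.RightInverse.surjective hr)]
  have key := ae_eq_of_setLIntegral_exp_eq μ MeasurableSet.univ (hφmeas (γ * δ))
    (b := fun x => φ γ (R δ x) + φ δ x)
    (((hφmeas γ).comp (hRmeas δ)).add (hφmeas δ)) ?_
  · filter_upwards [key] with x hx using hx trivial
  intro E _ hE
  have hE' : MeasurableSet (R δ '' E) := by rw [himg]; exact hRmeas _ hE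
  rw [← hφ (γ * δ) E (Set.subset_univ _) hE, hRmul, Set.image_comp,
    hφ γ _ (Set.subset_univ _) hE']
  have hφδ := hφmeas δ
  have hφγ := hφmeas γ
  have hRδ := hRmeas δ
  calc ∫⁻ y in R δ '' E, ENNReal.ofReal (Real.exp (φ γ y)) ∂μ
      = ∫⁻ y in R δ '' E, ENNReal.ofReal (Real.exp (φ γ y))
          ∂((μ.withDensity fun x => ENNReal.ofReal (Real.exp (φ δ x))).map (R δ)) := by rw [hmap]
    _ = ∫⁻ x in E, ENNReal.ofReal (Real.exp (φ γ (R δ x)))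
          ∂(μ.withDensity fun x => ENNReal.ofReal (Real.exp (φ δ x))) := by
        rw [setLIntegral_map hE' (by fun_prop) hRδ, hpre]
    _ = ∫⁻ x in E, ENNReal.ofReal (Real.exp (φ γ (R δ x) + φ δ x)) ∂μ := by
        rw [setLIntegral_withDensity_eq_setLIntegral_mul μ (by fun_prop) (by fun_prop) hE]
        refine lintegral_congr fun x => ?_
        simp only [Pi.mul_apply]
        rw [← ENNReal.ofReal_mul (Real.exp_nonneg _), ← Real.exp_add, add_comm]

/-! ### Null sets of the Maharam measure -/

/-- The Maharam measure has the same null sets as `μ × Lebesgue`. -/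
lemma ae_maharamMeasure (μ : Measure X) [SFinite μ] :
    ae (maharamMeasure μ) = ae (μ.prod (volume : Measure ℝ)) := by
  unfold maharamMeasure
  have hm : Measurable fun t : ℝ => ENNReal.ofReal (Real.exp t) := by fun_prop
  apply le_antisymm
  · exact (Measure.AbsolutelyContinuous.prod Measure.AbsolutelyContinuous.rfl
      (withDensity_absolutelyContinuous _ _)).ae_le
  · refine (Measure.AbsolutelyContinuous.prod Measure.AbsolutelyContinuous.rfl
      (withDensity_absolutelyContinuous' hm.aemeasurable ?_)).ae_le
    filter_upwards with t
    simp [Real.exp_pos]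

/-! ### Integrals along the fibres -/

/-- The integral of `F` along the fibre over `x`, from `s` to `t`, with respect to Lebesgue
measure (rather than `eᵗ dt`). -/
noncomputable def fiberIntegral (F : X × ℝ → ℝ) (s t : ℝ) (x : X) : ℝ :=
  ∫ u in s..t, F (x, u)

lemma measurable_fiberIntegral {F : X × ℝ → ℝ} (hF : Measurable F) (s t : ℝ) :
    Measurable (fiberIntegral F s t) := by
  unfold fiberIntegral intervalIntegral
  exact (hF.stronglyMeasurable.integral_prod_right').measurable.sub
    (hF.stronglyMeasurable.integral_prod_right').measurable

lemma locallyIntegrable_fiber {F : X × ℝ → ℝ} (hF : Measurable F) {C : ℝ}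
    (hC : ∀ p, |F p| ≤ C) (x : X) : LocallyIntegrable (fun u => F (x, u)) volume := by
  refine (locallyIntegrable_const C).mono
    (hF.comp measurable_prodMk_left).aestronglyMeasurable ?_
  filter_upwards with u
  exact (hC _).trans (le_abs_self C)

lemma intervalIntegrable_fiber {F : X × ℝ → ℝ} (hF : Measurable F) {C : ℝ}
    (hC : ∀ p, |F p| ≤ C) (x : X) (s t : ℝ) :
    IntervalIntegrable (fun u => F (x, u)) volume s t :=
  ((locallyIntegrable_fiber hF hC x).integrableOn_isCompact isCompact_uIcc).intervalIntegrable

lemma abs_fiberIntegral_shift_sub_le {F : X × ℝ → ℝ} (hF : Measurable F) {C : ℝ}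
    (hC : ∀ p, |F p| ≤ C) (x : X) (s t d : ℝ) :
    |fiberIntegral F (s + d) (t + d) x - fiberIntegral F s t x| ≤ 2 * C * |d| := by
  have hi := intervalIntegrable_fiber hF hC x
  have hb : ∀ a b, |fiberIntegral F a b x| ≤ C * |b - a| := fun a b => by
    unfold fiberIntegral
    rw [← Real.norm_eq_abs]
    exact intervalIntegral.norm_integral_le_of_norm_le_const fun u _ => hC _
  have e1 : fiberIntegral F s (s + d) x + fiberIntegral F (s + d) (t + d) x
      = fiberIntegral F s (t + d) x :=
    intervalIntegral.integral_add_adjacent_intervals (hi _ _) (hi _ _)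
  have e2 : fiberIntegral F s t x + fiberIntegral F t (t + d) x = fiberIntegral F s (t + d) x :=
    intervalIntegral.integral_add_adjacent_intervals (hi _ _) (hi _ _)
  have e3 : fiberIntegral F (s + d) (t + d) x - fiberIntegral F s t x
      = fiberIntegral F t (t + d) x - fiberIntegral F s (s + d) x := by linarith
  have h1 := hb t (t + d)
  have h2 := hb s (s + d)
  rw [add_sub_cancel_left] at h1 h2
  rw [e3]
  calc _ ≤ _ := abs_sub _ _
    _ ≤ 2 * C * |d| := by linarith

/-- Invariance of `F` under the Maharam extension, in terms of fibre integrals. A single null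
set of `x` works for all endpoints `s`, `t`. -/
lemma ae_fiberIntegral_equivariant {Γ : Type*} [Countable Γ] (μ : Measure X) [SFinite μ]
    (R : Γ → X → X) (φ : Γ → X → ℝ) {F : X × ℝ → ℝ}
    (hinv : ∀ γ : Γ, F ∘ maharamMap (R γ) (φ γ) =ᵐ[maharamMeasure μ] F) :
    ∀ᵐ x ∂μ, ∀ γ s t,
      fiberIntegral F (s - φ γ x) (t - φ γ x) (R γ x) = fiberIntegral F s t x := by
  rw [ae_all_iff]
  intro γ
  have h := hinv γ
  rw [EventuallyEq, ae_maharamMeasure] at h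
  filter_upwards [Measure.ae_ae_of_ae_prod h] with x hx s t
  unfold fiberIntegral
  rw [← intervalIntegral.integral_comp_sub_right (fun u => F (R γ x, u))]
  refine intervalIntegral.integral_congr_ae ?_
  filter_upwards [hx] with u hu _
  exact hu

/-- If every real is an essential value, the fibre integrals of a bounded invariant function
do not increase when the interval is translated. As `r` is arbitrary this is an equality. -/
lemma ae_fiberIntegral_translate_le [StandardBorelSpace X] {Γ : Type*} [Countable Γ]
    (μ : Measure X) [IsFiniteMeasure μ] (R : Γ → X → X) (φ : Γ → X → ℝ)
    (hRmeas : ∀ γ, Measurable (R γ)) (hφmeas : ∀ γ, Measurable (φ γ))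
    (hφ : ∀ γ : Γ, IsLogDeriv μ (R γ) Set.univ (φ γ))
    (hess : ∀ r : ℝ, IsEssentialValueFor μ (fun x y => ∃ γ : Γ, y = R γ x) r)
    {F : X × ℝ → ℝ} (hF : Measurable F) {C : ℝ} (hC : ∀ p, |F p| ≤ C)
    (hinv : ∀ γ : Γ, F ∘ maharamMap (R γ) (φ γ) =ᵐ[maharamMeasure μ] F) (s t r : ℝ) :
    ∀ᵐ x ∂μ, fiberIntegral F (s + r) (t + r) x ≤ fiberIntegral F s t x := by
  by_contra hcon
  obtain ⟨p, q, hpq, hpos⟩ : ∃ p q : ℚ, p < q ∧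
      0 < μ {x | fiberIntegral F s t x < p ∧ q < fiberIntegral F (s + r) (t + r) x} := by
    by_contra hno
    push Not at hno
    refine hcon ?_
    have hall : ∀ᵐ x ∂μ, ∀ p q : ℚ, p < q →
        ¬ (fiberIntegral F s t x < p ∧ q < fiberIntegral F (s + r) (t + r) x) := by
      simp only [ae_all_iff]
      intro p q hpq
      rw [ae_iff]
      simpa using hno p q hpq
    filter_upwards [hall] with x hx
    by_contra! hlt
    obtain ⟨p, hp1, hp2⟩ := exists_rat_btwn hlt
    obtain ⟨q, hq1, hq2⟩ := exists_rat_btwn hp2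
    exact hx p q (by exact_mod_cast hq1) ⟨hp1, hq2⟩
  have hEm : MeasurableSet
      {x | fiberIntegral F s t x < p ∧ q < fiberIntegral F (s + r) (t + r) x} :=
    (measurableSet_lt (measurable_fiberIntegral hF s t) measurable_const).inter
      (measurableSet_lt measurable_const (measurable_fiberIntegral hF _ _))
  have hpq' : (0 : ℝ) < q - p := sub_pos.2 (by exact_mod_cast hpq)
  have hCpos : 0 < 2 * |C| + 1 := by positivity
  obtain ⟨g, hg, hgpos⟩ := hess r _ hEm hpos ((q - p) / (2 * |C| + 1)) (div_pos hpq' hCpos)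
  have hae := (g.ae_exists_logDeriv_eq μ R φ hRmeas hφmeas hφ hg).and
    (ae_fiberIntegral_equivariant μ R φ hinv)
  obtain ⟨x, ⟨⟨⟨hxE, hxd⟩, hxE'⟩, hxr⟩, hx1, hx2⟩ :=
    ((frequently_ae_mem_iff.2 hgpos.ne').and_eventually hae).exists
  obtain ⟨γ, hγ, hγ'⟩ := hx1 hxd
  have h1 : fiberIntegral F s t (R γ x) < p := by
    have := hxE'.1
    rwa [hγ] at this
  have h2 := hxE.2
  have h3 := hx2 γ (s + r) (t + r)
  have h4 := abs_fiberIntegral_shift_sub_le hF hC (R γ x) s t (r - φ γ x)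
  rw [← add_sub_assoc, ← add_sub_assoc, h3] at h4
  have h5 : |r - φ γ x| < (q - p) / (2 * |C| + 1) := by
    rw [abs_sub_comm, ← hγ']
    exact hxr
  rw [lt_div_iff₀ hCpos] at h5
  have h6 : C * |r - φ γ x| ≤ |C| * |r - φ γ x| :=
    mul_le_mul_of_nonneg_right (le_abs_self C) (abs_nonneg _)
  have h7 := le_abs_self (fiberIntegral F (s + r) (t + r) x - fiberIntegral F s t (R γ x))
  have h8 := abs_nonneg (r - φ γ x)
  nlinarith

lemma ae_fiberIntegral_translate [StandardBorelSpace X] {Γ : Type*} [Countable Γ]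
    (μ : Measure X) [IsFiniteMeasure μ] (R : Γ → X → X) (φ : Γ → X → ℝ)
    (hRmeas : ∀ γ, Measurable (R γ)) (hφmeas : ∀ γ, Measurable (φ γ))
    (hφ : ∀ γ : Γ, IsLogDeriv μ (R γ) Set.univ (φ γ))
    (hess : ∀ r : ℝ, IsEssentialValueFor μ (fun x y => ∃ γ : Γ, y = R γ x) r)
    {F : X × ℝ → ℝ} (hF : Measurable F) {C : ℝ} (hC : ∀ p, |F p| ≤ C)
    (hinv : ∀ γ : Γ, F ∘ maharamMap (R γ) (φ γ) =ᵐ[maharamMeasure μ] F) (s t r : ℝ) :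
    ∀ᵐ x ∂μ, fiberIntegral F (s + r) (t + r) x = fiberIntegral F s t x := by
  have key := ae_fiberIntegral_translate_le μ R φ hRmeas hφmeas hφ hess hF hC hinv
  filter_upwards [key s t r, key (s + r) (t + r) (-r)] with x h1 h2
  rw [add_neg_cancel_right, add_neg_cancel_right] at h2
  exact le_antisymm h1 h2

/-- A function on a fibre whose integrals are invariant under rational translations of
rational intervals is almost everywhere constant. -/
lemma ae_eq_const_of_fiberIntegral_translate {F : X × ℝ → ℝ} (hF : Measurable F) {C : ℝ}
    (hC : ∀ p, |F p| ≤ C) (x : X)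
    (h : ∀ t r : ℚ, fiberIntegral F (0 + r) (t + r) x = fiberIntegral F 0 t x) :
    ∀ᵐ u, F (x, u) = fiberIntegral F 0 1 x := by
  have hi := intervalIntegrable_fiber hF hC x
  have hcont : Continuous fun t => fiberIntegral F 0 t x :=
    intervalIntegral.continuous_primitive hi 0
  have hadd : ∀ t r : ℝ, fiberIntegral F 0 (t + r) x
      = fiberIntegral F 0 t x + fiberIntegral F 0 r x := by
    have hd : DenseRange fun p : ℚ × ℚ => ((p.1 : ℝ), (p.2 : ℝ)) :=
      Rat.denseRange_cast.prodMap Rat.denseRange_cast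
    have heq := DenseRange.equalizer (f := fun p : ℚ × ℚ => ((p.1 : ℝ), (p.2 : ℝ)))
      (g := fun p : ℝ × ℝ => fiberIntegral F 0 (p.1 + p.2) x)
      (h := fun p : ℝ × ℝ => fiberIntegral F 0 p.1 x + fiberIntegral F 0 p.2 x) hd
      (hcont.comp (continuous_fst.add continuous_snd))
      ((hcont.comp continuous_fst).add (hcont.comp continuous_snd)) ?_
    · intro t r
      exact congrFun heq (t, r)
    funext p
    have h1 := h p.1 p.2
    rw [zero_add] at h1
    have h2 : fiberIntegral F 0 p.2 x + fiberIntegral F p.2 (p.1 + p.2) x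
        = fiberIntegral F 0 (p.1 + p.2) x :=
      intervalIntegral.integral_add_adjacent_intervals (hi _ _) (hi _ _)
    simp only [Function.comp_apply]
    linarith
  -- A continuous additive map `ℝ → ℝ` is linear.
  let L : ℝ →+ ℝ := AddMonoidHom.mk' (fun t => fiberIntegral F 0 t x) hadd
  have hlin : ∀ t, fiberIntegral F 0 t x = t * fiberIntegral F 0 1 x := fun t => by
    have := map_real_smul L hcont t 1
    simpa [L] using this
  filter_upwards [LocallyIntegrable.ae_hasDerivAt_integral (locallyIntegrable_fiber hF hC x)]
    with u hu
  have h1 : HasDerivAt (fun t => fiberIntegral F 0 t x) (F (x, u)) u := hu 0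
  have h2 : HasDerivAt (fun t => fiberIntegral F 0 t x) (fiberIntegral F 0 1 x) u := by
    rw [funext hlin]
    simpa using (hasDerivAt_id u).mul_const (fiberIntegral F 0 1 x)
  exact h1.unique h2

end Helpers

/-! ### The saturation of a box -/

/-- The saturation of the box `E × (-η, η)` under the Maharam extension of the action. -/
def boxSaturation {Γ : Type*} (R : Γ → X → X) (φ : Γ → X → ℝ) (E : Set X) (η : ℝ) :
    Set (X × ℝ) :=
  ⋃ γ, maharamMap (R γ) (φ γ) ⁻¹' (E ×ˢ Set.Ioo (-η) η)

lemma mem_boxSaturation {Γ : Type*} (R : Γ → X → X) (φ : Γ → X → ℝ) (E : Set X) (η : ℝ)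
    (x : X) (t : ℝ) :
    (x, t) ∈ boxSaturation R φ E η ↔ ∃ γ, R γ x ∈ E ∧ t - φ γ x ∈ Set.Ioo (-η) η := by
  simp [boxSaturation, maharamMap]

lemma measurableSet_boxSaturation [MeasurableSpace X] {Γ : Type*} [Countable Γ]
    (R : Γ → X → X) (φ : Γ → X → ℝ)
    (hRmeas : ∀ γ, Measurable (R γ)) (hφmeas : ∀ γ, Measurable (φ γ)) {E : Set X}
    (hE : MeasurableSet E) (η : ℝ) : MeasurableSet (boxSaturation R φ E η) := by
  refine MeasurableSet.iUnion fun γ => ?_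
  have hm : Measurable (maharamMap (R γ) (φ γ)) :=
    ((hRmeas γ).comp measurable_fst).prodMk
      (measurable_snd.sub ((hφmeas γ).comp measurable_fst))
  exact hm (hE.prod measurableSet_Ioo)

lemma boxSaturation_invariant [MeasurableSpace X] {Γ : Type*} [Group Γ] [Countable Γ]
    (μ : Measure X) [IsFiniteMeasure μ]
    (R : Γ → X → X) (φ : Γ → X → ℝ) (hRmeas : ∀ γ, Measurable (R γ)) (hR1 : R 1 = id)
    (hRmul : ∀ γ δ : Γ, R (γ * δ) = R γ ∘ R δ) (hφmeas : ∀ γ, Measurable (φ γ))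
    (hφ : ∀ γ : Γ, IsLogDeriv μ (R γ) Set.univ (φ γ)) (E : Set X) (η : ℝ) (δ : Γ) :
    ∀ᵐ p ∂(maharamMeasure μ),
      maharamMap (R δ) (φ δ) p ∈ boxSaturation R φ E η ↔ p ∈ boxSaturation R φ E η := by
  rw [ae_maharamMeasure]
  have hc : ∀ᵐ x ∂μ, ∀ γ, φ (γ * δ) x = φ γ (R δ x) + φ δ x :=
    ae_all_iff.2 fun γ => ae_logDeriv_mul μ R φ hRmeas hR1 hRmul hφmeas hφ γ δ
  filter_upwards [Measure.quasiMeasurePreserving_fst.ae hc] with p hp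
  obtain ⟨x, t⟩ := p
  simp only at hp
  rw [maharamMap, mem_boxSaturation, mem_boxSaturation]
  have hstep : ∀ γ, (R γ (R δ x) ∈ E ∧ t - φ δ x - φ γ (R δ x) ∈ Set.Ioo (-η) η) ↔
      (R (γ * δ) x ∈ E ∧ t - φ (γ * δ) x ∈ Set.Ioo (-η) η) := fun γ => by
    rw [hp γ, hRmul, sub_sub, add_comm (φ δ x)]
    rfl
  simp only [hstep]
  exact ((Group.mulRight_bijective δ).surjective.exists
    (p := fun γ => R γ x ∈ E ∧ t - φ γ x ∈ Set.Ioo (-η) η)).symm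

/-- **Lemma (ratio set and invariant functions of the Maharam extension).**
For a countable group `Γ` of nonsingular automorphisms `R` of a standard Borel
probability space `(X, μ)` (with `φ γ = log dμ∘R γ/dμ`), the ratio set of `Γ` is
all of `ℝ` if and only if every `Γ̃`-invariant `F ∈ L^∞(X̃, μ̃)` of the Maharam
extension is of the form `F(x,t) = f(x)` for `μ̃`-a.e. `(x,t)`. -/
theorem ratioSet_eq_univ_iff_maharam_invariant_functions
    [MeasurableSpace X] [StandardBorelSpace X]
    {Γ : Type*} [Group Γ] [Countable Γ]
    (μ : Measure X) [IsProbabilityMeasure μ]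
    (R : Γ → X → X) (φ : Γ → X → ℝ)
    (hRmeas : ∀ γ, Measurable (R γ))
    (hR1 : R 1 = id)
    (hRmul : ∀ γ δ : Γ, R (γ * δ) = R γ ∘ R δ)
    (hφmeas : ∀ γ, Measurable (φ γ))
    (hφ : ∀ γ : Γ, IsLogDeriv μ (R γ) Set.univ (φ γ)) :
    (∀ r : ℝ, IsEssentialValueFor μ (fun x y => ∃ γ : Γ, y = R γ x) r) ↔
      ∀ F : X × ℝ → ℝ, Measurable F →
        (∃ C : ℝ, ∀ᵐ p ∂(maharamMeasure μ), |F p| ≤ C) →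
        (∀ γ : Γ, F ∘ maharamMap (R γ) (φ γ) =ᵐ[maharamMeasure μ] F) →
        ∃ f : X → ℝ, F =ᵐ[maharamMeasure μ] fun p => f p.1 := by
  constructor
  · rintro hess F hF ⟨C, hC⟩ hinv
    -- Truncate `F` to `[-|C|, |C|]` so that it is bounded everywhere.
    let c : ℝ → ℝ := fun y => max (-|C|) (min |C| y)
    have hc : Measurable c := by fun_prop
    have hGm : Measurable (c ∘ F) := hc.comp hF
    have hGC : ∀ p, |(c ∘ F) p| ≤ |C| := fun p =>
      abs_le.2 ⟨le_max_left _ _, max_le (by linarith [abs_nonneg C]) (min_le_left _ _)⟩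
    have hFG : F =ᵐ[maharamMeasure μ] c ∘ F := by
      filter_upwards [hC] with p hp
      have h1 := abs_le.1 (hp.trans (le_abs_self C))
      simp only [Function.comp_apply, c]
      rw [min_eq_right h1.2, max_eq_right h1.1]
    have hGinv : ∀ γ : Γ, (c ∘ F) ∘ maharamMap (R γ) (φ γ) =ᵐ[maharamMeasure μ] c ∘ F :=
      fun γ => (hinv γ).fun_comp c
    refine ⟨fiberIntegral (c ∘ F) 0 1, hFG.trans ?_⟩
    rw [EventuallyEq, ae_maharamMeasure]
    refine (Measure.ae_prod_iff_ae_ae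
      (measurableSet_eq_fun hGm ((measurable_fiberIntegral hGm 0 1).comp measurable_fst))).2 ?_
    have hall : ∀ᵐ x ∂μ, ∀ t r : ℚ,
        fiberIntegral (c ∘ F) (0 + r) (t + r) x = fiberIntegral (c ∘ F) 0 t x := by
      simp only [ae_all_iff]
      exact fun t r => ae_fiberIntegral_translate μ R φ hRmeas hφmeas hφ hess hGm hGC hGinv 0 t r
    filter_upwards [hall] with x hx
    exact ae_eq_const_of_fiberIntegral_translate hGm hGC x hx
  · intro H r E hE hEpos ε hε
    have hBm := measurableSet_boxSaturation R φ hRmeas hφmeas hE (ε / 2)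
    have hbdd : ∀ p, |(boxSaturation R φ E (ε / 2)).indicator (fun _ => (1 : ℝ)) p| ≤ 1 := by
      intro p
      by_cases hp : p ∈ boxSaturation R φ E (ε / 2) <;> simp [hp]
    obtain ⟨f, hf⟩ := H ((boxSaturation R φ E (ε / 2)).indicator fun _ => 1)
      (measurable_const.indicator hBm) ⟨1, Eventually.of_forall hbdd⟩ (by
        intro δ
        filter_upwards [boxSaturation_invariant μ R φ hRmeas hR1 hRmul hφmeas hφ E (ε / 2) δ]
          with p hp
        by_cases h : p ∈ boxSaturation R φ E (ε / 2)
        · simp [h, hp.2 h]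
        · simp [h, mt hp.1 h])
    rw [EventuallyEq, ae_maharamMeasure] at hf
    have hφ1 : ∀ᵐ x ∂μ, φ 1 x = 0 := by
      filter_upwards [ae_logDeriv_mul μ R φ hRmeas hR1 hRmul hφmeas hφ 1 1] with x hx
      simpa [hR1] using hx
    have hex : ∀ᵐ x ∂μ, x ∈ E → ∃ γ, R γ x ∈ E ∧ |φ γ x - r| < ε := by
      filter_upwards [Measure.ae_ae_of_ae_prod hf, hφ1] with x hx hx1 hxE
      have hpick : ∀ a : ℝ, ∃ t ∈ Set.Ioo (a - ε / 2) (a + ε / 2),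
          (boxSaturation R φ E (ε / 2)).indicator (fun _ => (1 : ℝ)) (x, t) = f x := by
        intro a
        have hv : volume (Set.Ioo (a - ε / 2) (a + ε / 2)) ≠ 0 := by
          simp [Real.volume_Ioo, hε]
        exact ((frequently_ae_mem_iff.2 hv).and_eventually hx).exists
      obtain ⟨t, ht, htf⟩ := hpick 0
      have hfx : f x = 1 := by
        rw [← htf, Set.indicator_of_mem]
        rw [mem_boxSaturation]
        refine ⟨1, by simpa [hR1] using hxE, ?_⟩
        rw [hx1]
        constructor <;> linarith [ht.1, ht.2]
      obtain ⟨u, hu, huf⟩ := hpick r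
      have huB : (x, u) ∈ boxSaturation R φ E (ε / 2) := by
        by_contra hnot
        rw [Set.indicator_of_notMem hnot, hfx] at huf
        exact zero_ne_one huf
      obtain ⟨γ, hγ, hγu⟩ := (mem_boxSaturation R φ E _ x u).1 huB
      refine ⟨γ, hγ, abs_lt.2 ⟨?_, ?_⟩⟩ <;>
        linarith [hu.1, hu.2, hγu.1, hγu.2]
    obtain ⟨γ, hγ⟩ : ∃ γ, 0 < μ (E ∩ R γ ⁻¹' E ∩ {x | |φ γ x - r| < ε}) := by
      by_contra! hno
      have hnull : μ (⋃ γ, E ∩ R γ ⁻¹' E ∩ {x | |φ γ x - r| < ε}) = 0 :=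
        measure_iUnion_null fun γ => nonpos_iff_eq_zero.1 (hno γ)
      obtain ⟨x, hxE, hx1, hx2⟩ := ((frequently_ae_mem_iff.2 hEpos.ne').and_eventually
        (hex.and (measure_eq_zero_iff_ae_notMem.1 hnull))).exists
      obtain ⟨γ, h1, h2⟩ := hx1 hxE
      exact hx2 (Set.mem_iUnion.2 ⟨γ, ⟨hxE, h1⟩, h2⟩)
    have hinj : Function.Injective (R γ) := by
      refine Function.LeftInverse.injective (g := R γ⁻¹) fun x => ?_
      have := congrFun (hRmul γ⁻¹ γ) x
      simpa [hR1] using this.symm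
    refine ⟨⟨Set.univ, R γ, φ γ, MeasurableSet.univ, hRmeas γ, hφmeas γ, hinj.injOn, hφ γ⟩,
      Eventually.of_forall fun x => ⟨γ, rfl⟩, ?_⟩
    simpa using hγ


end MaharamLemma
end

section
/- Let ν = ν_{(P_n : n ∈ ℤ)} and μ = μ_{(Q_n : n ∈ ℤ)} be Markov measures on a topologically mixing subshift of finite type X_A, both satisfying the Doeblin condition. Then ν is absolutely continuous with respect to μ if and only if Σ_{n≥1} Σ_{s,u,v,t ∈ S} (√(P̂_{−n}(u,s)·P_n(v,t)) − √(Q̂_{−n}(u,s)·Q_n(v,t)))² < ∞. In particular, since this criterion is symmetric in ν and μ, ν ≪ μ if and only if μ ≪ ν, so any two such measures are either equivalent or mutually singular in the sense that neither is absolutely continuous with respect to the other. -/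
/-!
Reading a two-sided sequence from the centre outwards turns it into the one-sided path
`(x_0, x_0), (x_{-1}, x_1), …` in `S × S`. Under `ν` this path is a Markov chain with transition
matrices `T_n = P̂_{-n} ⊗ P_n` (`real_pairs_singleton`), under `μ` one with `U_n = Q̂_{-n} ⊗ Q_n`. Since
`∑_z (√T_n(y,z) - √U_n(y,z))² = 2 (1 - ∑_z √(T_n(y,z) U_n(y,z)))`, the criterion says that the
row-sum deficits of the substochastic matrices `R_n = √(T_n U_n)` (entrywise) are summable.

If `ν ≪ μ`, the affinities `a_n = ∑_w √(ν(w) μ(w))` over words of length `n + 1` are bounded away from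
`0` (`affinity_lower`). They are the total masses of a row vector multiplied by `R_0 ⋯ R_{n-1}`.
Primitivity and the Doeblin condition let `M` steps reach any state `y` with weight at least `δ ^ M`,
so `a_n - a_{n+M+1}` is at least a constant times the deficit of `R_{n+M}` at `y`; telescoping gives
summability (`summable_loss`).

Conversely, if the deficits are summable, compare `ν` with the chain that follows `T` before time `m`
and `U` afterwards. It is dominated by a multiple of `μ`, and its affinity with `ν` is close to `1` for
large `m`. The inequality `a ≤ 2 b + 2 (√a - √b)²` then yields `ν ≤ C μ + ε` on all cylinder sets
(`uniform_bound`), and approximation by cylinder sets gives `ν ≪ μ` (`ac_of_uniform_bound`).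

The deficits are symmetric in `T` and `U`, whence `ν ≪ μ ↔ μ ≪ ν`.
-/

open MeasureTheory Filter Topology

namespace MarkovSFT

/-- The reverse transition matrices `P̂_n(s,t) = π_{n-1}(t) P_{n-1}(t,s) / π_n(s)`. -/
noncomputable def reverseP {S : Type*} (P : ℤ → S → S → ℝ) (π : ℤ → S → ℝ)
    (n : ℤ) (s t : S) : ℝ :=
  if 0 < π n s then π (n - 1) t * P (n - 1) t s / π n s else 0

/-! ### Path weights of an inhomogeneous chain on a finite set -/

section Words
variable {Y : Type*}

/-- The weight `p(w₀) ∏ T_i(w_i, w_{i+1})` of the word `w = w₀ … w_n` for the initial weights `p` and the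
(not necessarily stochastic) matrices `T_i`. -/
def wt (p : Y → ℝ) (T : ℕ → Y → Y → ℝ) (n : ℕ) (w : Fin (n + 1) → Y) : ℝ :=
  p (w 0) * ∏ i : Fin n, T i (w i.castSucc) (w i.succ)

theorem wt_nonneg {p : Y → ℝ} {T : ℕ → Y → Y → ℝ} (hp : ∀ y, 0 ≤ p y)
    (hT : ∀ n y z, 0 ≤ T n y z) (n : ℕ) (w : Fin (n + 1) → Y) : 0 ≤ wt p T n w :=
  mul_nonneg (hp _) (Finset.prod_nonneg fun _ _ => hT _ _ _)

theorem wt_snoc (p : Y → ℝ) (T : ℕ → Y → Y → ℝ) (n : ℕ) (w : Fin (n + 1) → Y) (z : Y) :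
    wt p T (n + 1) (Fin.snoc (α := fun _ => Y) w z) = wt p T n w * T n (w (Fin.last n)) z := by
  unfold wt
  rw [Fin.prod_univ_castSucc]
  have h0 : (Fin.snoc (α := fun _ => Y) w z : Fin (n + 2) → Y) 0 = w 0 := by
    exact Fin.snoc_castSucc (α := fun _ => Y) z w 0
  have h1 : ∀ i : Fin n, (Fin.snoc (α := fun _ => Y) w z : Fin (n + 2) → Y) i.castSucc.succ
      = w i.succ := by
    intro i
    rw [← Fin.castSucc_succ]
    exact Fin.snoc_castSucc (α := fun _ => Y) z w i.succ
  simp only [h0, h1, Fin.snoc_castSucc, Fin.succ_last, Fin.snoc_last, Fin.val_castSucc,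
    Fin.val_last]
  ring

theorem wt_sq {p q r : Y → ℝ} {T U R : ℕ → Y → Y → ℝ} (hr : ∀ y, r y ^ 2 = p y * q y)
    (hR : ∀ n y z, R n y z ^ 2 = T n y z * U n y z) (n : ℕ) (w : Fin (n + 1) → Y) :
    wt r R n w ^ 2 = wt p T n w * wt q U n w := by
  unfold wt
  rw [mul_pow, ← Finset.prod_pow, hr, mul_mul_mul_comm, ← Finset.prod_mul_distrib]
  simp only [hR]

/-- The chain that follows `T` up to time `m` and `U` afterwards is dominated by a constant multiple of
the `U`-chain, the constant being independent of the word length. -/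
theorem wt_le_of_le {p q : Y → ℝ} {T U : ℕ → Y → Y → ℝ} {K : ℝ} (hK : 1 ≤ K)
    (hp : ∀ y, 0 ≤ p y) (hU : ∀ n y z, 0 ≤ U n y z) (hT : ∀ n y z, 0 ≤ T n y z) (m : ℕ)
    (hpq : ∀ y, p y ≤ K * q y) (hTU : ∀ n y z, T n y z ≤ K * U n y z) (n : ℕ)
    (w : Fin (n + 1) → Y) :
    wt p (fun k => if k < m then T k else U k) n w ≤ K ^ (m + 1) * wt q U n w := by
  unfold wt
  have h1 : ∏ i : Fin n, (if (i : ℕ) < m then T i else U i) (w i.castSucc) (w i.succ)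
      ≤ ∏ i : Fin n, (if (i : ℕ) < m then K else 1) * U i (w i.castSucc) (w i.succ) := by
    refine Finset.prod_le_prod (fun i _ => ?_) fun i _ => ?_
    · split_ifs
      · exact hT _ _ _
      · exact hU _ _ _
    · split_ifs
      · exact hTU _ _ _
      · rw [one_mul]
  have h2 : ∏ i : Fin n, (if (i : ℕ) < m then K else 1) ≤ K ^ m := by
    rw [← Finset.prod_range (fun i => if i < m then K else 1), Finset.prod_ite]
    rw [Finset.prod_const_one, mul_one, Finset.prod_const]
    refine pow_le_pow_right₀ hK ?_
    calc _ ≤ (Finset.range m).card := Finset.card_le_card fun i hi => by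
            simp at hi ⊢; exact hi.2
      _ = m := Finset.card_range m
  rw [Finset.prod_mul_distrib] at h1
  have hPU : 0 ≤ ∏ i : Fin n, U i (w i.castSucc) (w i.succ) :=
    Finset.prod_nonneg fun _ _ => hU _ _ _
  have h3 := h1.trans (mul_le_mul_of_nonneg_right h2 hPU)
  calc _ ≤ p (w 0) * (K ^ m * ∏ i : Fin n, U i (w i.castSucc) (w i.succ)) :=
        mul_le_mul_of_nonneg_left h3 (hp _)
    _ ≤ (K * q (w 0)) * (K ^ m * ∏ i : Fin n, U i (w i.castSucc) (w i.succ)) :=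
        mul_le_mul_of_nonneg_right (hpq _) (by positivity)
    _ = _ := by ring

variable [Fintype Y]

/-- The total of `g(w_n)` over all words of length `n + 1`, weighted by `wt`; in matrix notation
`p T_0 ⋯ T_{n-1} g`. -/
def wsum (p : Y → ℝ) (T : ℕ → Y → Y → ℝ) (n : ℕ) (g : Y → ℝ) : ℝ :=
  ∑ w : Fin (n + 1) → Y, wt p T n w * g (w (Fin.last n))

/-- The action `T_n g` of the `n`-th matrix on a column vector. -/
def stepOp (T : ℕ → Y → Y → ℝ) (n : ℕ) (g : Y → ℝ) (y : Y) : ℝ := ∑ z, T n y z * g z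

/-- `iterOp T n j g` is the matrix product `T_n ⋯ T_{n+j-1}` applied to the column vector `g`. -/
def iterOp (T : ℕ → Y → Y → ℝ) (n : ℕ) : ℕ → (Y → ℝ) → (Y → ℝ)
  | 0, g => g
  | j + 1, g => iterOp T n j (stepOp T (n + j) g)

theorem wsum_succ (p : Y → ℝ) (T : ℕ → Y → Y → ℝ) (n : ℕ) (g : Y → ℝ) :
    wsum p T (n + 1) g = wsum p T n (stepOp T n g) := by
  unfold wsum stepOp
  rw [← (Fin.snocEquiv (fun _ : Fin (n + 2) => Y)).sum_comp, Fintype.sum_prod_type_right]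
  refine Finset.sum_congr rfl fun w _ => ?_
  rw [Finset.mul_sum]
  refine Finset.sum_congr rfl fun z _ => ?_
  have : (Fin.snocEquiv (fun _ : Fin (n + 2) => Y)) (z, w)
      = Fin.snoc (α := fun _ => Y) w z := rfl
  rw [this, wt_snoc, Fin.snoc_last]
  ring

theorem wsum_zero (p : Y → ℝ) (T : ℕ → Y → Y → ℝ) (g : Y → ℝ) :
    wsum p T 0 g = ∑ y, p y * g y := by
  unfold wsum wt
  rw [← (Equiv.funUnique (Fin 1) Y).symm.sum_comp]
  simp

theorem wsum_mono {p : Y → ℝ} {T : ℕ → Y → Y → ℝ} (hp : ∀ y, 0 ≤ p y)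
    (hT : ∀ n y z, 0 ≤ T n y z) (n : ℕ) {g h : Y → ℝ} (hgh : ∀ y, g y ≤ h y) :
    wsum p T n g ≤ wsum p T n h :=
  Finset.sum_le_sum fun _ _ => mul_le_mul_of_nonneg_left (hgh _) (wt_nonneg hp hT _ _)

theorem wsum_smul (p : Y → ℝ) (T : ℕ → Y → Y → ℝ) (n : ℕ) (c : ℝ) (g : Y → ℝ) :
    wsum p T n (fun y => c * g y) = c * wsum p T n g := by
  unfold wsum
  rw [Finset.mul_sum]
  exact Finset.sum_congr rfl fun _ _ => by ring

theorem wsum_iterOp (p : Y → ℝ) (T : ℕ → Y → Y → ℝ) (n j : ℕ) (g : Y → ℝ) :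
    wsum p T (n + j) g = wsum p T n (iterOp T n j g) := by
  induction j generalizing g with
  | zero => rfl
  | succ j ih => rw [← add_assoc, wsum_succ, ih]; rfl

theorem stepOp_mono {T : ℕ → Y → Y → ℝ} (hT : ∀ n y z, 0 ≤ T n y z) (n : ℕ) {g h : Y → ℝ}
    (hgh : ∀ y, g y ≤ h y) (y : Y) : stepOp T n g y ≤ stepOp T n h y :=
  Finset.sum_le_sum fun _ _ => mul_le_mul_of_nonneg_left (hgh _) (hT _ _ _)

theorem iterOp_mono {T : ℕ → Y → Y → ℝ} (hT : ∀ n y z, 0 ≤ T n y z) (n j : ℕ) {g h : Y → ℝ}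
    (hgh : ∀ y, g y ≤ h y) (y : Y) : iterOp T n j g y ≤ iterOp T n j h y := by
  induction j generalizing g h with
  | zero => exact hgh y
  | succ j ih => exact ih (stepOp_mono hT _ hgh)

theorem iterOp_sub_smul (T : ℕ → Y → Y → ℝ) (n j : ℕ) (c : ℝ) (g h : Y → ℝ) :
    iterOp T n j (fun y => g y - c * h y)
      = fun y => iterOp T n j g y - c * iterOp T n j h y := by
  induction j generalizing g h with
  | zero => rfl
  | succ j ih =>
    have : stepOp T (n + j) (fun y => g y - c * h y)
        = fun y => stepOp T (n + j) g y - c * stepOp T (n + j) h y := by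
      funext y
      unfold stepOp
      rw [Finset.mul_sum, ← Finset.sum_sub_distrib]
      exact Finset.sum_congr rfl fun _ _ => by ring
    simp only [iterOp, this, ih]

theorem iterOp_one_le {T : ℕ → Y → Y → ℝ} (hT : ∀ n y z, 0 ≤ T n y z)
    (hT1 : ∀ n y, ∑ z, T n y z ≤ 1) (n j : ℕ) (y : Y) : iterOp T n j (fun _ => 1) y ≤ 1 := by
  induction j with
  | zero => exact le_rfl
  | succ j ih =>
    refine le_trans (iterOp_mono hT n j (fun z => ?_) y) ih
    simpa [stepOp] using hT1 (n + j) z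

/-- A path along which all entries are at least `δ` contributes `δ ^ j` to the corresponding entry of
`T_n ⋯ T_{n+j-1}`. -/
theorem iterOp_path {T : ℕ → Y → Y → ℝ} [DecidableEq Y] (hT : ∀ n y z, 0 ≤ T n y z) {δ : ℝ}
    (hδ : 0 ≤ δ) (n j : ℕ) (u : ℕ → Y) (hu : ∀ i < j, ∀ n, δ ≤ T n (u i) (u (i + 1))) :
    δ ^ j ≤ iterOp T n j (Pi.single (u j) 1) (u 0) := by
  induction j with
  | zero => simp [iterOp]
  | succ j ih =>
    have h1 : ∀ y, 0 - (-δ) * (Pi.single (u j) 1 : Y → ℝ) y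
        ≤ stepOp T (n + j) (Pi.single (u (j + 1)) 1) y := by
      intro y
      have h2 : stepOp T (n + j) (Pi.single (u (j + 1)) 1) y = T (n + j) y (u (j + 1)) := by
        simp [stepOp, Pi.single_apply]
      rw [h2]
      by_cases hy : y = u j
      · subst hy
        simpa using hu j (Nat.lt_succ_self j) (n + j)
      · simpa [Pi.single_apply, hy] using hT _ _ _
    have h3 := iterOp_mono hT n j h1 (u 0)
    rw [iterOp_sub_smul T n j (-δ) (fun _ => 0)] at h3
    have h4 : iterOp T n j (fun _ => 0) (u 0) = 0 := by
      have := congrFun (iterOp_sub_smul T n j 1 (fun _ => 0) (fun _ => 0)) (u 0)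
      simpa using this
    have h5 := ih fun i hi => hu i (Nat.lt_succ_of_lt hi)
    calc δ ^ (j + 1) = δ * δ ^ j := by ring
      _ ≤ δ * iterOp T n j (Pi.single (u j) 1) (u 0) := mul_le_mul_of_nonneg_left h5 hδ
      _ ≤ iterOp T n j (stepOp T (n + j) (Pi.single (u (j + 1)) 1)) (u 0) := by
        simp only [h4] at h3; linarith

/-- From any state, `M` steps of `R` reach `z` with weight at least `δ ^ M`, and the next step then loses
the row-sum deficit of `R_{n+M}` at `z`. Hence `M + 1` steps shrink the total mass by the stated factor. -/
theorem wsum_block {p : Y → ℝ} {R : ℕ → Y → Y → ℝ} (hp : ∀ y, 0 ≤ p y)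
    (hR : ∀ n y z, 0 ≤ R n y z) (hR1 : ∀ n y, ∑ z, R n y z ≤ 1) {δ : ℝ} (hδ : 0 ≤ δ) {M : ℕ}
    (hM : ∀ y z : Y, ∃ u : ℕ → Y, u 0 = y ∧ u M = z ∧ ∀ i < M, ∀ n, δ ≤ R n (u i) (u (i + 1)))
    (n : ℕ) (z : Y) :
    wsum p R (n + (M + 1)) (fun _ => 1)
      ≤ (1 - δ ^ M * (1 - ∑ t, R (n + M) z t)) * wsum p R n (fun _ => 1) := by
  classical
  rw [wsum_iterOp, ← wsum_smul]
  refine wsum_mono hp hR n fun y => ?_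
  set e := 1 - ∑ t, R (n + M) z t with he
  have he0 : 0 ≤ e := by have := hR1 (n + M) z; linarith
  have h1 : ∀ y, stepOp R (n + M) (fun _ => 1) y ≤ 1 - e * (Pi.single z 1 : Y → ℝ) y := by
    intro y
    by_cases hy : y = z
    · subst hy; simp [stepOp, he]
    · simpa [stepOp, Pi.single_apply, hy] using hR1 (n + M) y
  have h2 := iterOp_mono hR n M h1 y
  rw [iterOp_sub_smul R n M e (fun _ => 1)] at h2
  have h3 := iterOp_one_le hR hR1 n M y
  obtain ⟨u, rfl, rfl, hu⟩ := hM y z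
  have h4 := mul_le_mul_of_nonneg_left (iterOp_path hR hδ n M u hu) he0
  simp only [iterOp] at h2 ⊢
  linarith

theorem sum_sub_shift (a : ℕ → ℝ) (L N : ℕ) :
    ∑ n ∈ Finset.range N, (a n - a (n + L))
      = ∑ n ∈ Finset.range L, a n - ∑ n ∈ Finset.range L, a (n + N) := by
  induction N with
  | zero => simp
  | succ N ih =>
    rw [Finset.sum_range_succ, ih]
    have := Finset.sum_range_sub' (fun n => a (n + N)) L
    rw [Finset.sum_sub_distrib] at this
    simp only [zero_add] at this
    have h2 : ∑ x ∈ Finset.range L, a (x + 1 + N) = ∑ x ∈ Finset.range L, a (x + (N + 1)) :=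
      Finset.sum_congr rfl fun x _ => by congr 1; ring
    rw [h2] at this
    rw [add_comm L N] at this
    linarith

theorem wsum_succ_le {p : Y → ℝ} {R : ℕ → Y → Y → ℝ} (hp : ∀ y, 0 ≤ p y)
    (hR : ∀ n y z, 0 ≤ R n y z) (hR1 : ∀ n y, ∑ z, R n y z ≤ 1) (n : ℕ) :
    wsum p R (n + 1) (fun _ => 1) ≤ wsum p R n (fun _ => 1) := by
  rw [wsum_succ]
  exact wsum_mono hp hR n fun y => by simpa [stepOp] using hR1 n y

/-- If the total mass of `p R_0 ⋯ R_{n-1}` stays bounded away from `0`, then the row-sum deficits of the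
substochastic matrices `R_n` are summable: by `wsum_block` they are dominated by the telescoping
differences `a_n - a_{n+M+1}` of the total masses. -/
theorem summable_loss {p : Y → ℝ} {R : ℕ → Y → Y → ℝ} (hp : ∀ y, 0 ≤ p y)
    (hR : ∀ n y z, 0 ≤ R n y z) (hR1 : ∀ n y, ∑ z, R n y z ≤ 1) {δ : ℝ} (hδ : 0 < δ) {M : ℕ}
    (hM : ∀ y z : Y, ∃ u : ℕ → Y, u 0 = y ∧ u M = z ∧ ∀ i < M, ∀ n, δ ≤ R n (u i) (u (i + 1)))
    {ε : ℝ} (hε : 0 < ε) (hlow : ∀ n, ε ≤ wsum p R n (fun _ => 1)) :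
    Summable fun n => ∑ y, (1 - ∑ z, R n y z) := by
  refine summable_sum fun y _ => ?_
  rw [← summable_nat_add_iff M]
  set a : ℕ → ℝ := fun n => wsum p R n (fun _ => 1) with ha
  have hanti : Antitone a := antitone_nat_of_succ_le (wsum_succ_le hp hR hR1)
  have hc : 0 < δ ^ M * ε := by positivity
  have he : ∀ n, 0 ≤ 1 - ∑ t, R (n + M) y t := fun n => by linarith [hR1 (n + M) y]
  refine summable_of_sum_range_le (c := (δ ^ M * ε)⁻¹ * ((M + 1) * a 0)) he fun N => ?_
  rw [← div_eq_inv_mul, le_div_iff₀ hc, mul_comm]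
  have h1 : ∀ n, δ ^ M * ε * (1 - ∑ t, R (n + M) y t) ≤ a n - a (n + (M + 1)) := by
    intro n
    have h2 := wsum_block hp hR hR1 hδ.le hM n y
    have h3 : δ ^ M * (1 - ∑ t, R (n + M) y t) * ε ≤ δ ^ M * (1 - ∑ t, R (n + M) y t) * a n :=
      mul_le_mul_of_nonneg_left (hlow n) (mul_nonneg (by positivity) (he n))
    simp only [ha] at h3 ⊢
    linarith
  rw [Finset.mul_sum]
  refine (Finset.sum_le_sum fun n _ => h1 n).trans ?_
  rw [sum_sub_shift]
  have h4 : ∑ n ∈ Finset.range (M + 1), a n ≤ (M + 1) * a 0 := by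
    have := Finset.sum_le_card_nsmul (Finset.range (M + 1)) a (a 0)
      fun n _ => hanti (Nat.zero_le n)
    simpa using this
  have h5 : 0 ≤ ∑ n ∈ Finset.range (M + 1), a (n + N) :=
    Finset.sum_nonneg fun n _ => hε.le.trans (hlow _)
  linarith

theorem wsum_one_eq {p : Y → ℝ} {T : ℕ → Y → Y → ℝ} (hp1 : ∑ y, p y = 1)
    (hT1 : ∀ n y, ∑ z, T n y z = 1) (n : ℕ) : ∑ w, wt p T n w = 1 := by
  have h : ∀ n, wsum p T n (fun _ => 1) = 1 := by
    intro n
    induction n with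
    | zero => simpa [wsum_zero] using hp1
    | succ n ih =>
      rw [wsum_succ]
      have : stepOp T n (fun _ => 1) = fun _ => 1 := by
        funext y; simpa [stepOp] using hT1 n y
      rw [this, ih]
  simpa [wsum] using h n

/-- The total mass lost after `n` steps is at most the sum of all row-sum deficits so far. -/
theorem wsum_lower {p : Y → ℝ} {R : ℕ → Y → Y → ℝ} (hp : ∀ y, 0 ≤ p y) (hp1 : ∑ y, p y = 1)
    (hR : ∀ n y z, 0 ≤ R n y z) (hR1 : ∀ n y, ∑ z, R n y z ≤ 1) (n : ℕ) :
    1 - ∑ k ∈ Finset.range n, ∑ y, (1 - ∑ z, R k y z) ≤ wsum p R n (fun _ => 1) := by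
  have hanti : Antitone fun n => wsum p R n (fun _ => 1) :=
    antitone_nat_of_succ_le (wsum_succ_le hp hR hR1)
  induction n with
  | zero => simp [wsum_zero, hp1]
  | succ n ih =>
    rw [Finset.sum_range_succ, wsum_succ]
    set D := ∑ y, (1 - ∑ z, R n y z) with hD
    have hnn : ∀ y, 0 ≤ 1 - ∑ z, R n y z := fun y => by linarith [hR1 n y]
    have hD0 : 0 ≤ D := Finset.sum_nonneg fun y _ => hnn y
    have h1 : ∀ y, (1 - D) * 1 ≤ stepOp R n (fun _ => 1) y := by
      intro y
      have : 1 - ∑ z, R n y z ≤ D :=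
        Finset.single_le_sum (f := fun y => 1 - ∑ z, R n y z) (fun y _ => hnn y)
          (Finset.mem_univ y)
      simp only [stepOp, mul_one]
      linarith
    have h2 := wsum_mono hp hR n h1
    rw [wsum_smul p R n (1 - D) (fun _ => 1)] at h2
    have h3 : wsum p R n (fun _ => 1) ≤ 1 := by
      have := hanti (Nat.zero_le n)
      simpa [wsum_zero, hp1] using this
    nlinarith

/-- Row sums of the entrywise geometric mean of two stochastic matrices are at most `1`. -/
theorem sum_le_one_of_sq {T U R : Y → ℝ} (hT : ∀ z, 0 ≤ T z) (hU : ∀ z, 0 ≤ U z)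
    (hT1 : ∑ z, T z = 1) (hU1 : ∑ z, U z = 1) (hRs : ∀ z, R z ^ 2 = T z * U z) :
    ∑ z, R z ≤ 1 := by
  have : ∑ z, R z ≤ ∑ z, (T z + U z) / 2 := by
    refine Finset.sum_le_sum fun z _ => ?_
    refine abs_le_of_sq_le_sq' ?_ (by have := hT z; have := hU z; positivity) |>.2
    rw [hRs]; nlinarith [sq_nonneg (T z - U z)]
  rw [← Finset.sum_div, Finset.sum_add_distrib, hT1, hU1] at this
  linarith

/-- If the Hellinger deficits of `T` and `U` are summable, then the `T`-weights are absolutely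
continuous with respect to the `U`-weights on finite words, uniformly in the word length. -/
theorem uniform_bound {p q : Y → ℝ} {T U R : ℕ → Y → Y → ℝ} {K : ℝ} (hK : 1 ≤ K)
    (hp : ∀ y, 0 ≤ p y) (hp1 : ∑ y, p y = 1)
    (hT : ∀ n y z, 0 ≤ T n y z) (hU : ∀ n y z, 0 ≤ U n y z) (hR : ∀ n y z, 0 ≤ R n y z)
    (hT1 : ∀ n y, ∑ z, T n y z = 1) (hU1 : ∀ n y, ∑ z, U n y z = 1)
    (hRs : ∀ n y z, R n y z ^ 2 = T n y z * U n y z)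
    (hpq : ∀ y, p y ≤ K * q y) (hTU : ∀ n y z, T n y z ≤ K * U n y z)
    (hsum : Summable fun n => ∑ y, (1 - ∑ z, R n y z)) {ε : ℝ} (hε : 0 < ε) :
    ∃ C : ℝ, 0 ≤ C ∧ ∀ (n : ℕ) (s : Finset (Fin (n + 1) → Y)),
      ∑ w ∈ s, wt p T n w ≤ C * ∑ w ∈ s, wt q U n w + ε := by
  set D : ℕ → ℝ := fun n => ∑ y, (1 - ∑ z, R n y z) with hD
  have hR1 : ∀ n y, ∑ z, R n y z ≤ 1 := fun n y =>
    sum_le_one_of_sq (hT n y) (hU n y) (hT1 n y) (hU1 n y) (hRs n y)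
  have hD0 : ∀ n, 0 ≤ D n := fun n => Finset.sum_nonneg fun y _ => by linarith [hR1 n y]
  obtain ⟨m, hm⟩ : ∃ m, ∑' k, D (k + m) < ε / 4 := by
    have := (tendsto_sum_nat_add D).eventually (gt_mem_nhds (show (0:ℝ) < ε / 4 by positivity))
    exact this.exists
  -- `V` follows `T` before time `m` and `U` from then on; `G` is the geometric mean of `T` and `V`,
  -- so that its deficits vanish before time `m` and have total at most `ε / 4`.
  set V : ℕ → Y → Y → ℝ := fun k => if k < m then T k else U k with hV
  set G : ℕ → Y → Y → ℝ := fun k => if k < m then T k else R k with hG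
  have hG0 : ∀ n y z, 0 ≤ G n y z := fun n y z => by
    simp only [hG]; split_ifs
    exacts [hT _ _ _, hR _ _ _]
  have hV0 : ∀ n y z, 0 ≤ V n y z := fun n y z => by
    simp only [hV]; split_ifs
    exacts [hT _ _ _, hU _ _ _]
  have hV1 : ∀ n y, ∑ z, V n y z = 1 := fun n y => by
    simp only [hV]; split_ifs
    exacts [hT1 _ _, hU1 _ _]
  have hGs : ∀ n y z, G n y z ^ 2 = T n y z * V n y z := fun n y z => by
    simp only [hG, hV]; split_ifs
    exacts [pow_two _, hRs _ _ _]
  have hG1 : ∀ n y, ∑ z, G n y z ≤ 1 := fun n y =>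
    sum_le_one_of_sq (hT n y) (hV0 n y) (hT1 n y) (hV1 n y) (hGs n y)
  have hloss : ∀ n, ∑ k ∈ Finset.range n, ∑ y, (1 - ∑ z, G k y z) ≤ ε / 4 := by
    intro n
    have h1 : ∀ k, ∑ y, (1 - ∑ z, G k y z) = if k < m then 0 else D k := by
      intro k
      simp only [hG, hD]; split_ifs
      · simp [hT1]
      · rfl
    have h2 : ∑ k ∈ Finset.range n, ∑ y, (1 - ∑ z, G k y z)
        ≤ ∑ k ∈ Finset.range (m + n), ∑ y, (1 - ∑ z, G k y z) :=
      Finset.sum_le_sum_of_subset_of_nonneg (Finset.range_mono (Nat.le_add_left n m))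
        fun k _ _ => Finset.sum_nonneg fun y _ => by linarith [hG1 k y]
    refine h2.trans ?_
    rw [Finset.sum_range_add]
    have h3 : ∑ k ∈ Finset.range m, ∑ y, (1 - ∑ z, G k y z) = 0 :=
      Finset.sum_eq_zero fun k hk => by rw [h1, if_pos (Finset.mem_range.1 hk)]
    have h4 : ∑ k ∈ Finset.range n, ∑ y, (1 - ∑ z, G (m + k) y z)
        = ∑ k ∈ Finset.range n, D (k + m) :=
      Finset.sum_congr rfl fun k _ => by
        rw [h1, if_neg (by omega), add_comm]
    rw [h3, h4, zero_add]
    exact (Summable.sum_le_tsum _ (fun k _ => hD0 _) ((summable_nat_add_iff m).2 hsum)).trans hm.le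
  refine ⟨2 * K ^ (m + 1), by positivity, fun n s => ?_⟩
  have haff : 1 - ε / 4 ≤ ∑ w, wt p G n w := by
    have h1 := wsum_lower hp hp1 hG0 hG1 n
    have h2 : wsum p G n (fun _ => 1) = ∑ w, wt p G n w := by simp [wsum]
    linarith [hloss n]
  have hwp := wt_nonneg hp hT n
  have hwV := wt_nonneg hp hV0 n
  -- The summand is the square `(√a - √b) ^ 2` for `a = wt p T n w` and `b = wt p V n w`.
  have hs : ∑ w ∈ s, (wt p T n w + wt p V n w - 2 * wt p G n w) ≤ ε / 2 := by
    refine (Finset.sum_le_sum_of_subset_of_nonneg (Finset.subset_univ s) fun w _ _ => ?_).trans ?_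
    · have h1 := wt_sq (p := p) (q := p) (r := p) (fun y => pow_two _) hGs n w
      have h2 : wt p G n w ≤ (wt p T n w + wt p V n w) / 2 := by
        refine abs_le_of_sq_le_sq' ?_ (by have := hwp w; have := hwV w; positivity) |>.2
        rw [h1]; nlinarith [sq_nonneg (wt p T n w - wt p V n w)]
      linarith
    · rw [Finset.sum_sub_distrib, Finset.sum_add_distrib, wsum_one_eq hp1 hT1, wsum_one_eq hp1 hV1,
        ← Finset.mul_sum]
      linarith
  -- This is `a ≤ 2 b + 2 (√a - √b) ^ 2`, followed by the domination of `b` by the `U`-weight.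
  have hpt : ∀ w, wt p T n w ≤ 2 * K ^ (m + 1) * wt q U n w
      + 2 * (wt p T n w + wt p V n w - 2 * wt p G n w) := by
    intro w
    have h1 := wt_sq (p := p) (q := p) (r := p) (fun y => pow_two _) hGs n w
    have h2 : 4 * wt p G n w ≤ wt p T n w + 4 * wt p V n w := by
      refine abs_le_of_sq_le_sq' ?_ (by have := hwp w; have := hwV w; positivity) |>.2
      rw [mul_pow, h1]; nlinarith [sq_nonneg (wt p T n w - 4 * wt p V n w)]
    have h3 := wt_le_of_le hK hp hU hT m hpq hTU n w
    linarith
  calc ∑ w ∈ s, wt p T n w ≤ ∑ w ∈ s, (2 * K ^ (m + 1) * wt q U n w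
      + 2 * (wt p T n w + wt p V n w - 2 * wt p G n w)) := Finset.sum_le_sum fun w _ => hpt w
    _ = 2 * K ^ (m + 1) * ∑ w ∈ s, wt q U n w
        + 2 * ∑ w ∈ s, (wt p T n w + wt p V n w - 2 * wt p G n w) := by
      rw [Finset.sum_add_distrib, Finset.mul_sum, Finset.mul_sum]
    _ ≤ _ := by linarith

end Words
/-! ### Measures on two-sided sequences and the growing windows `x_{-n} … x_n` -/

section Measures
variable {S : Type*}

/-- The window `x_{-n} … x_n` recorded as the word of pairs `(x_0, x_0), (x_{-1}, x_1), …, (x_{-n}, x_n)`.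
Thus a two-sided sequence becomes a one-sided path in `S × S`. -/
def pairs (n : ℕ) (x : Seq S) : Fin (n + 1) → S × S :=
  fun i => (x (-((i : ℕ) : ℤ)), x ((i : ℕ) : ℤ))

variable [MeasurableSpace S]

theorem measurable_pairs (n : ℕ) : Measurable (pairs (S := S) n) := by
  unfold pairs; fun_prop

variable [Fintype S]

theorem exists_pairs_of_cylinder {t : Set (Seq S)}
    (ht : t ∈ measurableCylinders fun _ : ℤ => S) :
    ∃ (n : ℕ) (s : Finset (Fin (n + 1) → S × S)),
      t = pairs n ⁻¹' (s : Set (Fin (n + 1) → S × S)) := by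
  classical
  obtain ⟨I, B, -, rfl⟩ := (mem_measurableCylinders _).1 ht
  set n := I.sup Int.natAbs with hn
  refine ⟨n, (Set.toFinite (pairs n '' cylinder I B)).toFinset, ?_⟩
  rw [Set.Finite.coe_toFinset]
  refine Set.Subset.antisymm (Set.subset_preimage_image _ _) ?_
  rintro x ⟨x', hx', hxx⟩
  rw [mem_cylinder] at hx' ⊢
  convert hx' using 1
  funext ⟨i, hi⟩
  have hin : i.natAbs < n + 1 := Nat.lt_succ_of_le (Finset.le_sup (f := Int.natAbs) hi)
  have h := congrFun hxx ⟨i.natAbs, hin⟩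
  simp only [pairs, Prod.mk.injEq] at h
  simp only [Finset.restrict]
  rcases Int.natAbs_eq i with h' | h'
  · rw [h']; exact h.2.symm
  · rw [h']; exact h.1.symm

variable [MeasurableSingletonClass S]

theorem measurableSet_pairs (n : ℕ) (s : Set (Fin (n + 1) → S × S)) :
    MeasurableSet (pairs n ⁻¹' s) :=
  measurable_pairs n (Set.toFinite s).measurableSet

theorem real_pairs {ν : Measure (Seq S)} [IsFiniteMeasure ν] {p : S × S → ℝ}
    {T : ℕ → S × S → S × S → ℝ}
    (hν : ∀ n w, ν.real (pairs n ⁻¹' {w}) = wt p T n w) (n : ℕ)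
    (s : Finset (Fin (n + 1) → S × S)) :
    ν.real (pairs n ⁻¹' (s : Set (Fin (n + 1) → S × S))) = ∑ w ∈ s, wt p T n w := by
  rw [← sum_measureReal_preimage_singleton s fun y _ => measurableSet_pairs n {y}]
  exact Finset.sum_congr rfl fun w _ => hν n w

/-- A bound `ν ≤ C μ + ε` on all cylinder sets passes to all measurable sets by approximation, so it
gives `ν ≪ μ` once it is available for every `ε`. -/
theorem ac_of_uniform_bound {ν μ : Measure (Seq S)} [IsFiniteMeasure ν] [IsFiniteMeasure μ]
    {p q : S × S → ℝ} {T U : ℕ → S × S → S × S → ℝ}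
    (hν : ∀ n w, ν.real (pairs n ⁻¹' {w}) = wt p T n w)
    (hμ : ∀ n w, μ.real (pairs n ⁻¹' {w}) = wt q U n w)
    (h : ∀ ε : ℝ, 0 < ε → ∃ C : ℝ, 0 ≤ C ∧ ∀ (n : ℕ) (s : Finset (Fin (n + 1) → S × S)),
      ∑ w ∈ s, wt p T n w ≤ C * ∑ w ∈ s, wt q U n w + ε) : ν ≪ μ := by
  refine Measure.AbsolutelyContinuous.mk fun E hE hμE => ?_
  have hμE' : μ.real E = 0 := by simp [measureReal_def, hμE]
  suffices ν.real E = 0 from (measureReal_eq_zero_iff).1 this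
  refine le_antisymm (le_of_forall_pos_le_add fun ε hε => ?_) measureReal_nonneg
  obtain ⟨C, hC, hCb⟩ := h (ε / 2) (by positivity)
  set η : ℝ := ε / (2 * (C + 1)) with hη
  have hη0 : 0 < η := by positivity
  obtain ⟨t, ht, htE⟩ := exists_measure_symmDiff_lt_of_generateFrom_isSetRing (μ := μ + ν)
    isSetRing_measurableCylinders
    ⟨{Set.univ}, Set.countable_singleton _,
      Set.singleton_subset_iff.2 (univ_mem_measurableCylinders _), by simp⟩
    generateFrom_measurableCylinders.symm hE (ENNReal.ofReal_pos.2 hη0)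
  obtain ⟨n, s, rfl⟩ := exists_pairs_of_cylinder ht
  set t := pairs n ⁻¹' (s : Set (Fin (n + 1) → S × S)) with ht'
  have h1 : (μ + ν).real (symmDiff t E) ≤ η :=
    ENNReal.toReal_le_of_le_ofReal hη0.le htE.le
  rw [measureReal_add_apply] at h1
  have h2 : ν.real E ≤ ν.real t + ν.real (symmDiff t E) := by
    refine (measureReal_mono (fun x hx => ?_)).trans (measureReal_union_le t (symmDiff t E))
    by_cases hxt : x ∈ t
    · exact Or.inl hxt
    · exact Or.inr (Or.inr ⟨hx, hxt⟩)
  have h3 : μ.real t ≤ μ.real E + μ.real (symmDiff t E) := by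
    refine (measureReal_mono (fun x hx => ?_)).trans (measureReal_union_le E (symmDiff t E))
    by_cases hxE : x ∈ E
    · exact Or.inl hxE
    · exact Or.inr (Or.inl ⟨hx, hxE⟩)
  have h4 := hCb n s
  rw [← real_pairs hν, ← real_pairs hμ] at h4
  have h5 : 0 ≤ μ.real (symmDiff t E) := measureReal_nonneg
  have h6 : 0 ≤ ν.real (symmDiff t E) := measureReal_nonneg
  have h7 : C * μ.real t ≤ C * η := mul_le_mul_of_nonneg_left (by linarith) hC
  have h8 : (C + 1) * η = ε / 2 := by rw [hη]; field_simp
  linarith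

/-- If `ν ≪ μ`, the affinities `∑ √(ν(w) μ(w))` over words of length `n + 1` stay away from `0`. Otherwise
the set of words with `μ(w) ≤ ν(w)` would have small `μ`-measure and its complement small `ν`-measure. -/
theorem affinity_lower {ν μ : Measure (Seq S)} [IsProbabilityMeasure ν] [IsProbabilityMeasure μ]
    {p q r : S × S → ℝ} {T U R : ℕ → S × S → S × S → ℝ}
    (hp : ∀ y, 0 ≤ p y) (hq : ∀ y, 0 ≤ q y) (hr : ∀ y, 0 ≤ r y)
    (hT : ∀ n y z, 0 ≤ T n y z) (hU : ∀ n y z, 0 ≤ U n y z) (hR : ∀ n y z, 0 ≤ R n y z)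
    (hrs : ∀ y, r y ^ 2 = p y * q y) (hRs : ∀ n y z, R n y z ^ 2 = T n y z * U n y z)
    (hν : ∀ n w, ν.real (pairs n ⁻¹' {w}) = wt p T n w)
    (hμ : ∀ n w, μ.real (pairs n ⁻¹' {w}) = wt q U n w) (hac : ν ≪ μ) :
    ∃ ε : ℝ, 0 < ε ∧ ∀ n, ε ≤ wsum r R n (fun _ => 1) := by
  classical
  obtain ⟨η, hη, hηE⟩ := exists_pos_setLIntegral_lt_of_measure_lt (μ := μ) (f := ν.rnDeriv μ)
    (ε := ENNReal.ofReal (1 / 2)) (by rw [Measure.lintegral_rnDeriv hac]; simp)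
    (by simp)
  obtain ⟨η', hη', hηη⟩ := ENNReal.lt_iff_exists_real_btwn.1 hη
  have hη'0 : 0 < η' := ENNReal.ofReal_pos.1 hηη.1
  refine ⟨min η' (1 / 2), by positivity, fun n => ?_⟩
  by_contra! hlt
  obtain ⟨hlt1, hlt2⟩ := lt_min_iff.1 hlt
  set s : Finset (Fin (n + 1) → S × S) := Finset.univ.filter fun w => wt q U n w ≤ wt p T n w
    with hs
  have hw : wsum r R n (fun _ => 1) = ∑ w, wt r R n w := by simp [wsum]
  have hr0 := wt_nonneg hr hR n
  have hp0 := wt_nonneg hp hT n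
  have hq0 := wt_nonneg hq hU n
  have hμs : μ.real (pairs n ⁻¹' (s : Set (Fin (n + 1) → S × S))) < η' := by
    rw [real_pairs hμ]
    refine lt_of_le_of_lt ?_ hlt1
    rw [hw]
    refine le_trans (Finset.sum_le_sum fun w hws => ?_)
      (Finset.sum_le_sum_of_subset_of_nonneg (Finset.subset_univ s) fun w _ _ => hr0 w)
    refine abs_le_of_sq_le_sq' ?_ (hr0 w) |>.2
    rw [wt_sq hrs hRs, pow_two]
    exact mul_le_mul_of_nonneg_right (Finset.mem_filter.1 hws).2 (hq0 w)
  have hνs : ν.real (pairs n ⁻¹' (s : Set (Fin (n + 1) → S × S))) < 1 / 2 := by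
    have h1 : μ (pairs n ⁻¹' (s : Set (Fin (n + 1) → S × S))) < η := by
      refine lt_trans ?_ hηη.2
      rw [← ofReal_measureReal]
      exact (ENNReal.ofReal_lt_ofReal_iff hη'0).2 hμs
    have h2 := hηE _ h1
    rw [Measure.setLIntegral_rnDeriv hac, ← ofReal_measureReal,
      ENNReal.ofReal_lt_ofReal_iff (by norm_num)] at h2
    exact h2
  have hνc : ν.real (pairs n ⁻¹' ((sᶜ : Finset (Fin (n + 1) → S × S)) :
      Set (Fin (n + 1) → S × S))) < 1 / 2 := by
    rw [real_pairs hν]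
    refine lt_of_le_of_lt ?_ hlt2
    rw [hw]
    refine le_trans (Finset.sum_le_sum fun w hws => ?_)
      (Finset.sum_le_sum_of_subset_of_nonneg (Finset.subset_univ sᶜ) fun w _ _ => hr0 w)
    refine abs_le_of_sq_le_sq' ?_ (hr0 w) |>.2
    rw [wt_sq hrs hRs, pow_two]
    refine mul_le_mul_of_nonneg_left ?_ (hp0 w)
    simp only [hs, Finset.mem_compl, Finset.mem_filter, Finset.mem_univ, true_and, not_le] at hws
    exact hws.le
  rw [Finset.coe_compl, Set.preimage_compl, probReal_compl_eq_one_sub (measurableSet_pairs n _)]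
    at hνc
  linarith

end Measures

/-! ### The pair chain `(x_{-n}, x_n)` of a Markov measure -/

section Markov
variable {S : Type*}

open Classical in
/-- The law of `(x_0, x_0)`: the distribution `π_0` on the diagonal of `S × S`. -/
noncomputable def pairInit (π : ℤ → S → ℝ) (y : S × S) : ℝ := if y.1 = y.2 then π 0 y.1 else 0

/-- The transition matrix of the pair chain `(x_{-n}, x_n)`: the first coordinate moves backward in time
by `P̂_{-n}`, the second one forward by `P_n`. -/
noncomputable def pairT (P : ℤ → S → S → ℝ) (π : ℤ → S → ℝ) (n : ℕ) (y z : S × S) : ℝ :=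
  reverseP P π (-(n : ℤ)) y.1 z.1 * P n y.2 z.2

variable {A : S → S → Bool} {P : ℤ → S → S → ℝ} {π : ℤ → S → ℝ}

theorem reverseP_of_pos (hpos : ∀ n s, 0 < π n s) (n : ℤ) (s t : S) :
    reverseP P π n s t = π (n - 1) t * P (n - 1) t s / π n s := if_pos (hpos n s)

/-- The pair chain inherits primitivity, with first coordinates running along reversed paths. -/
theorem exists_pair_path (hA : IsPrimitive A) : ∃ M : ℕ, ∀ y z : S × S, ∃ u : ℕ → S × S,
    u 0 = y ∧ u M = z ∧
      ∀ i < M, A (u (i + 1)).1 (u i).1 = true ∧ A (u i).2 (u (i + 1)).2 = true := by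
  obtain ⟨M, -, hM⟩ := hA
  refine ⟨M, fun y z => ?_⟩
  obtain ⟨a, ha0, haM, ha⟩ := hM z.1 y.1
  obtain ⟨b, hb0, hbM, hb⟩ := hM y.2 z.2
  refine ⟨fun i => (a (M - i), b i), by simp [haM, hb0], by simp [ha0, hbM], fun i hi => ?_⟩
  have h1 := ha (M - (i + 1)) (by omega)
  rw [show M - (i + 1) + 1 = M - i by omega] at h1
  exact ⟨h1, hb i hi⟩

variable [Fintype S] [MeasurableSpace S] {ν : Measure (Seq S)}

/-- Primitivity and the Doeblin condition bound all coordinate distributions below uniformly, so the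
reverse transition matrices are genuine quotients. -/
theorem exists_dist_lower (hA : IsPrimitive A) (hν : IsMarkovMeasure ν A P π)
    (hD : Doeblin A P) : ∃ c : ℝ, 0 < c ∧ ∀ n s, c ≤ π n s := by
  obtain ⟨M, -, hM⟩ := hA
  obtain ⟨δ, hδ, hP⟩ := hD
  have hpath : ∀ (j : ℕ) (n : ℤ) (u : ℕ → S), (∀ i < j, A (u i) (u (i + 1)) = true) →
      π n (u 0) * δ ^ j ≤ π (n + j) (u j) := by
    intro j n u
    induction j with
    | zero => simp
    | succ j ih =>
      intro hu
      have h1 := ih fun i hi => hu i (Nat.lt_succ_of_lt hi)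
      have h2 := (hP (n + j) _ _).2 (hu j (Nat.lt_succ_self j))
      have h3 : π (n + j) (u j) * P (n + j) (u j) (u (j + 1)) ≤ π (n + j + 1) (u (j + 1)) := by
        rw [← hν.consistent (n + j) (u (j + 1))]
        exact Finset.single_le_sum
          (f := fun s => π (n + j) s * P (n + j) s (u (j + 1)))
          (fun s _ => mul_nonneg (hν.dist_nonneg _ _) ((hν.stochastic _).1 _ _))
          (Finset.mem_univ _)
      have h4 : n + ((j + 1 : ℕ) : ℤ) = n + j + 1 := by push_cast; ring
      rw [h4]
      calc π n (u 0) * δ ^ (j + 1) = π n (u 0) * δ ^ j * δ := by ring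
        _ ≤ π (n + j) (u j) * P (n + j) (u j) (u (j + 1)) :=
          mul_le_mul h1 h2 hδ.le (hν.dist_nonneg _ _)
        _ ≤ _ := h3
  have hne : Nonempty S := by
    by_contra h
    rw [not_nonempty_iff] at h
    have := hν.dist_sum 0
    simp at this
  have hcard : (0 : ℝ) < Fintype.card S := by exact_mod_cast Fintype.card_pos
  refine ⟨δ ^ M / Fintype.card S, by positivity, fun n t => ?_⟩
  rw [div_le_iff₀ hcard]
  have h1 : ∀ s, π (n - M) s * δ ^ M ≤ π n t := by
    intro s
    obtain ⟨u, rfl, rfl, hu⟩ := hM s t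
    have := hpath M (n - M) u hu
    rwa [sub_add_cancel] at this
  have h2 := Finset.sum_le_sum fun s (_ : s ∈ Finset.univ) => h1 s
  rw [← Finset.sum_mul, hν.dist_sum, one_mul, Finset.sum_const, nsmul_eq_mul,
    Finset.card_univ] at h2
  linarith

theorem dist_le_one (hν : IsMarkovMeasure ν A P π) (n : ℤ) (s : S) : π n s ≤ 1 := by
  rw [← hν.dist_sum n]
  exact Finset.single_le_sum (fun s _ => hν.dist_nonneg n s) (Finset.mem_univ s)

theorem sum_reverseP (hν : IsMarkovMeasure ν A P π) (hpos : ∀ n s, 0 < π n s) (n : ℤ) (s : S) :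
    ∑ t, reverseP P π n s t = 1 := by
  simp only [reverseP_of_pos hpos]
  rw [← Finset.sum_div, hν.consistent, sub_add_cancel, div_self (hpos n s).ne']

theorem reverseP_nonneg (hν : IsMarkovMeasure ν A P π) (n : ℤ) (s t : S) :
    0 ≤ reverseP P π n s t := by
  unfold reverseP
  split_ifs
  · exact div_nonneg (mul_nonneg (hν.dist_nonneg _ _) ((hν.stochastic _).1 _ _))
      (hν.dist_nonneg _ _)
  · exact le_rfl

theorem pairT_nonneg (hν : IsMarkovMeasure ν A P π) (n : ℕ) (y z : S × S) :
    0 ≤ pairT P π n y z :=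
  mul_nonneg (reverseP_nonneg hν _ _ _) ((hν.stochastic _).1 _ _)

theorem sum_pairT (hν : IsMarkovMeasure ν A P π) (hpos : ∀ n s, 0 < π n s) (n : ℕ) (y : S × S) :
    ∑ z, pairT P π n y z = 1 := by
  unfold pairT
  rw [Fintype.sum_prod_type]
  simp only [← Finset.mul_sum, (hν.stochastic _).2, mul_one]
  exact sum_reverseP hν hpos _ _

theorem pairT_eq_zero (hν : IsMarkovMeasure ν A P π) (n : ℕ) {y z : S × S}
    (h : ¬(A z.1 y.1 = true ∧ A y.2 z.2 = true)) : pairT P π n y z = 0 := by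
  unfold pairT
  rw [not_and_or, Bool.not_eq_true, Bool.not_eq_true] at h
  rcases h with h | h
  · simp [reverseP, hν.compat _ _ _ h]
  · simp [hν.compat _ _ _ h]

theorem exists_pairT_lower (hA : IsPrimitive A) (hν : IsMarkovMeasure ν A P π)
    (hD : Doeblin A P) : ∃ δ : ℝ, 0 < δ ∧ ∀ (n : ℕ) (y z : S × S),
      A z.1 y.1 = true → A y.2 z.2 = true → δ ≤ pairT P π n y z := by
  obtain ⟨c, hc, hπ⟩ := exists_dist_lower hA hν hD
  obtain ⟨δ, hδ, hP⟩ := hD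
  have hpos : ∀ n s, 0 < π n s := fun n s => hc.trans_le (hπ n s)
  refine ⟨c * δ * δ, by positivity, fun n y z h1 h2 => ?_⟩
  unfold pairT
  refine mul_le_mul ?_ ((hP _ _ _).2 h2) hδ.le (reverseP_nonneg hν _ _ _)
  rw [reverseP_of_pos hpos, le_div_iff₀ (hpos _ _)]
  calc c * δ * π (-(n : ℤ)) y.1 ≤ c * δ * 1 :=
        mul_le_mul_of_nonneg_left (dist_le_one hν _ _) (by positivity)
    _ ≤ _ := by
      rw [mul_one]
      exact mul_le_mul (hπ _ _) ((hP _ _ _).2 h1) hδ.le (hpos _ _).le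

theorem pairInit_nonneg (hν : IsMarkovMeasure ν A P π) (y : S × S) : 0 ≤ pairInit π y := by
  unfold pairInit
  split_ifs
  exacts [hν.dist_nonneg _ _, le_rfl]

theorem sum_pairInit (hν : IsMarkovMeasure ν A P π) : ∑ y, pairInit π y = 1 := by
  classical
  rw [Fintype.sum_prod_type]
  simpa [pairInit] using hν.dist_sum 0

/-- The cylinder formula, rewritten by expanding the window from the centre outwards. -/
theorem cylinder_eq_wt (hpos : ∀ n s, 0 < π n s) (n : ℕ) (x : Seq S) :
    π (-(n : ℤ)) (x (-(n : ℤ))) *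
      ∏ i ∈ Finset.range (2 * n), P (-(n : ℤ) + i) (x (-(n : ℤ) + i)) (x (-(n : ℤ) + (i + 1)))
      = wt (pairInit π) (pairT P π) n (pairs n x) := by
  induction n with
  | zero => simp [wt, pairInit, pairs]
  | succ n ih =>
    have hsn : pairs (n + 1) x = Fin.snoc (α := fun _ => S × S) (pairs n x)
        (x (-((n + 1 : ℕ) : ℤ)), x ((n + 1 : ℕ) : ℤ)) := by
      funext i
      refine Fin.lastCases ?_ (fun i => ?_) i
      · rw [Fin.snoc_last]; rfl
      · rw [Fin.snoc_castSucc]; rfl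
    rw [hsn, wt_snoc, ← ih, show 2 * (n + 1) = 2 * n + 1 + 1 by ring, Finset.prod_range_succ,
      Finset.prod_range_succ']
    have hprod : ∏ k ∈ Finset.range (2 * n), P (-((n + 1 : ℕ) : ℤ) + (k + 1 : ℕ))
        (x (-((n + 1 : ℕ) : ℤ) + (k + 1 : ℕ))) (x (-((n + 1 : ℕ) : ℤ) + ((k + 1 : ℕ) + 1)))
        = ∏ i ∈ Finset.range (2 * n),
          P (-(n : ℤ) + i) (x (-(n : ℤ) + i)) (x (-(n : ℤ) + (i + 1))) := by
      refine Finset.prod_congr rfl fun k _ => ?_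
      have e1 : -((n + 1 : ℕ) : ℤ) + ((k + 1 : ℕ) : ℤ) = -(n : ℤ) + k := by push_cast; ring
      have e2 : -((n + 1 : ℕ) : ℤ) + (((k + 1 : ℕ) : ℤ) + 1) = -(n : ℤ) + (k + 1) := by
        push_cast; ring
      rw [e1, e2]
    rw [hprod]
    simp only [pairT, pairs, Fin.val_last]
    rw [reverseP_of_pos hpos]
    have e1 : -((n + 1 : ℕ) : ℤ) = -(n : ℤ) - 1 := by push_cast; ring
    have e2 : -((n + 1 : ℕ) : ℤ) + ((0 : ℕ) : ℤ) = -(n : ℤ) - 1 := by push_cast; ring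
    have e3 : -((n + 1 : ℕ) : ℤ) + (((0 : ℕ) : ℤ) + 1) = -(n : ℤ) := by push_cast; ring
    have e4 : -((n + 1 : ℕ) : ℤ) + ((2 * n + 1 : ℕ) : ℤ) = n := by push_cast; ring
    have e5 : -((n + 1 : ℕ) : ℤ) + (((2 * n + 1 : ℕ) : ℤ) + 1) = ((n + 1 : ℕ) : ℤ) := by
      push_cast; ring
    rw [e2, e3, e4, e5, e1]
    have := (hpos (-(n : ℤ)) (x (-(n : ℤ)))).ne'
    field_simp

/-- Under a Markov measure the pairs `(x_{-n}, x_n)` form a Markov chain with initial law `pairInit` and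
transition matrices `pairT`. -/
theorem real_pairs_singleton (hν : IsMarkovMeasure ν A P π) (hpos : ∀ n s, 0 < π n s) (n : ℕ)
    (w : Fin (n + 1) → S × S) :
    ν.real (pairs n ⁻¹' {w}) = wt (pairInit π) (pairT P π) n w := by
  by_cases hw : ∃ x : Seq S, pairs n x = w
  · obtain ⟨x, rfl⟩ := hw
    have hset : pairs n ⁻¹' {pairs n x} = {x' : Seq S | ∀ i : Fin (2 * n + 1),
        x' (-(n : ℤ) - 1 + 1 + ((i : ℕ) : ℤ)) = x (-(n : ℤ) - 1 + 1 + ((i : ℕ) : ℤ))} := by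
      ext x'
      simp only [Set.mem_preimage, Set.mem_singleton_iff, Set.mem_ofPred_eq, sub_add_cancel]
      constructor
      · intro h i
        have hi := i.2
        rcases le_total n i with hni | hni
        · have h1 := congrFun h ⟨i - n, by omega⟩
          simp only [pairs, Prod.mk.injEq] at h1
          have e : (-(n : ℤ) + ((i : ℕ) : ℤ)) = ((i - n : ℕ) : ℤ) := by omega
          rw [e]; exact h1.2
        · have h1 := congrFun h ⟨n - i, by omega⟩
          simp only [pairs, Prod.mk.injEq] at h1
          have e : (-(n : ℤ) + ((i : ℕ) : ℤ)) = -((n - i : ℕ) : ℤ) := by omega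
          rw [e]; exact h1.1
      · intro h
        funext i
        have hi := i.2
        have h1 := h ⟨n - i, by omega⟩
        have h2 := h ⟨n + i, by omega⟩
        have e1 : (-(n : ℤ) + ((n - i : ℕ) : ℤ)) = -((i : ℕ) : ℤ) := by omega
        have e2 : (-(n : ℤ) + ((n + i : ℕ) : ℤ)) = ((i : ℕ) : ℤ) := by omega
        simp only [e1, e2] at h1 h2
        simp only [pairs, h1, h2]
    rw [measureReal_def, hset, hν.cylinder, ENNReal.toReal_ofReal, ← cylinder_eq_wt hpos,
      Finset.prod_range]
    · simp
    · exact mul_nonneg (hν.dist_nonneg _ _)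
        (Finset.prod_nonneg fun _ _ => (hν.stochastic _).1 _ _)
  · have h1 : pairs n ⁻¹' {w} = ∅ := by
      rw [Set.eq_empty_iff_forall_notMem]
      exact fun x hx => hw ⟨x, hx⟩
    -- A word of pairs that is not a window must violate the diagonal condition at `0`.
    have h2 : (w 0).1 ≠ (w 0).2 := by
      intro h0
      refine hw ⟨fun k => if h : k.natAbs < n + 1 then
        (if k < 0 then (w ⟨k.natAbs, h⟩).1 else (w ⟨k.natAbs, h⟩).2) else (w 0).1, ?_⟩
      funext i
      have hi := i.2
      refine Prod.ext ?_ ?_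
      · simp only [pairs, Int.natAbs_neg, Int.natAbs_natCast, hi, dite_true]
        split_ifs with hneg
        · rfl
        · have : i = 0 := by ext; simp at hneg ⊢; omega
          subst this; exact h0.symm
      · simp [pairs, hi]
    rw [h1, measureReal_empty, wt, pairInit, if_neg h2, zero_mul]

/-- The criterion in terms of the deficits `1 - ∑ √(T_n U_n)` of the pair chains. -/
theorem ac_iff_summable_loss [MeasurableSingletonClass S] {Q : ℤ → S → S → ℝ} {lam : ℤ → S → ℝ}
    {μ : Measure (Seq S)} (hA : IsPrimitive A) (hν : IsMarkovMeasure ν A P π) (hDP : Doeblin A P)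
    (hμ : IsMarkovMeasure μ A Q lam) (hDQ : Doeblin A Q) :
    ν ≪ μ ↔ Summable fun n : ℕ =>
      ∑ y, (1 - ∑ z, Real.sqrt (pairT P π n y z * pairT Q lam n y z)) := by
  have := hν.isProb
  have := hμ.isProb
  obtain ⟨c, hc, hπ⟩ := exists_dist_lower hA hν hDP
  obtain ⟨c', hc', hlam⟩ := exists_dist_lower hA hμ hDQ
  obtain ⟨δ, hδ, hPl⟩ := exists_pairT_lower hA hν hDP
  obtain ⟨δ', hδ', hQl⟩ := exists_pairT_lower hA hμ hDQ
  obtain ⟨M, hM⟩ := exists_pair_path hA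
  have hposP : ∀ n s, 0 < π n s := fun n s => hc.trans_le (hπ n s)
  have hposQ : ∀ n s, 0 < lam n s := fun n s => hc'.trans_le (hlam n s)
  have hT := pairT_nonneg hν
  have hU := pairT_nonneg hμ
  have hT1 := sum_pairT hν hposP
  have hU1 := sum_pairT hμ hposQ
  have hRs : ∀ n y z, Real.sqrt (pairT P π n y z * pairT Q lam n y z) ^ 2
      = pairT P π n y z * pairT Q lam n y z :=
    fun n y z => Real.sq_sqrt (mul_nonneg (hT _ _ _) (hU _ _ _))
  have hνw := real_pairs_singleton hν hposP
  have hμw := real_pairs_singleton hμ hposQ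
  constructor
  · intro hac
    obtain ⟨ε, hε, hlow⟩ := affinity_lower (pairInit_nonneg hν) (pairInit_nonneg hμ)
      (r := fun y => Real.sqrt (pairInit π y * pairInit lam y)) (fun y => Real.sqrt_nonneg _)
      hT hU (R := fun n y z => Real.sqrt (pairT P π n y z * pairT Q lam n y z))
      (fun _ _ _ => Real.sqrt_nonneg _)
      (fun y => Real.sq_sqrt (mul_nonneg (pairInit_nonneg hν _) (pairInit_nonneg hμ _)))
      hRs hνw hμw hac
    refine summable_loss (M := M) (δ := min δ δ') (fun y => Real.sqrt_nonneg _)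
      (fun _ _ _ => Real.sqrt_nonneg _)
      (fun n y => sum_le_one_of_sq (hT n y) (hU n y) (hT1 n y) (hU1 n y) (hRs n y))
      (lt_min hδ hδ') (fun y z => ?_) hε hlow
    obtain ⟨u, hu0, huM, hu⟩ := hM y z
    refine ⟨u, hu0, huM, fun i hi n => ?_⟩
    refine Real.le_sqrt_of_sq_le ?_
    rw [pow_two]
    exact mul_le_mul ((min_le_left _ _).trans (hPl n _ _ (hu i hi).1 (hu i hi).2))
      ((min_le_right _ _).trans (hQl n _ _ (hu i hi).1 (hu i hi).2)) (lt_min hδ hδ').le (hT _ _ _)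
  · intro hsum
    have hK : ∀ {a b e K : ℝ}, 0 < e → 1 / e ≤ K → a ≤ 1 → e ≤ b → a ≤ K * b := by
      intro a b e K he hK ha hb
      have h1 : 1 / e * e ≤ K * b :=
        mul_le_mul hK hb he.le (le_trans (by positivity) hK)
      rw [one_div_mul_cancel he.ne'] at h1
      exact ha.trans h1
    have i1 : 0 < 1 / δ' := by positivity
    have i2 : 0 < 1 / c' := by positivity
    refine ac_of_uniform_bound hνw hμw fun ε hε =>
      uniform_bound (K := 1 + 1 / δ' + 1 / c') (by linarith) (pairInit_nonneg hν)
        (sum_pairInit hν) hT hU (fun _ _ _ => Real.sqrt_nonneg _) hT1 hU1 hRs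
        (fun y => ?_) (fun n y z => ?_) hsum hε
    · by_cases hy : y.1 = y.2
      · simp only [pairInit, if_pos hy]
        exact hK hc' (by linarith) (dist_le_one hν _ _) (hlam _ _)
      · simp [pairInit, hy]
    · by_cases h : A z.1 y.1 = true ∧ A y.2 z.2 = true
      · refine hK hδ' (by linarith) ?_ (hQl n y z h.1 h.2)
        rw [← hT1 n y]
        exact Finset.single_le_sum (fun z _ => hT n y z) (Finset.mem_univ z)
      · simp [pairT_eq_zero hν n h, pairT_eq_zero hμ n h]

end Markov

/-- **Kakutani-type criterion for absolute continuity of Markov measures.**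
For Markov measures `ν = ν_{(P_n)}` and `μ = μ_{(Q_n)}` on a topologically mixing
SFT, both with the Doeblin condition: `ν ≪ μ` iff
`Σ_{n≥1} Σ_{s,u,v,t} (√(P̂_{-n}(u,s) P_n(v,t)) − √(Q̂_{-n}(u,s) Q_n(v,t)))² < ∞`.
In particular `ν ≪ μ ↔ μ ≪ ν`, so two such measures are either equivalent or
mutually non-absolutely-continuous. -/
theorem markov_absolutelyContinuous_iff
    {S : Type*} [Fintype S] [MeasurableSpace S] [MeasurableSingletonClass S]
    (A : S → S → Bool) (hA : IsPrimitive A)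
    (P : ℤ → S → S → ℝ) (π : ℤ → S → ℝ) (ν : Measure (Seq S))
    (hν : IsMarkovMeasure ν A P π) (hDP : Doeblin A P)
    (Q : ℤ → S → S → ℝ) (lam : ℤ → S → ℝ) (μ : Measure (Seq S))
    (hμ : IsMarkovMeasure μ A Q lam) (hDQ : Doeblin A Q) :
    (ν ≪ μ ↔
      Summable (fun n : ℕ => ∑ s : S, ∑ u : S, ∑ v : S, ∑ t : S,
        (Real.sqrt (reverseP P π (-((n : ℤ) + 1)) u s * P ((n : ℤ) + 1) v t)
          - Real.sqrt (reverseP Q lam (-((n : ℤ) + 1)) u s * Q ((n : ℤ) + 1) v t)) ^ 2)) ∧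
    (ν ≪ μ ↔ μ ≪ ν) := by
  refine ⟨?_, ?_⟩
  · rw [ac_iff_summable_loss hA hν hDP hμ hDQ, ← summable_nat_add_iff 1,
      ← summable_mul_left_iff (two_ne_zero (α := ℝ))]
    refine summable_congr fun n => ?_
    obtain ⟨c, hc, hπ⟩ := exists_dist_lower hA hν hDP
    obtain ⟨c', hc', hlam⟩ := exists_dist_lower hA hμ hDQ
    have hT1 := sum_pairT hν (fun n s => hc.trans_le (hπ n s)) (n + 1)
    have hU1 := sum_pairT hμ (fun n s => hc'.trans_le (hlam n s)) (n + 1)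
    have hT := pairT_nonneg hν (n + 1)
    have hU := pairT_nonneg hμ (n + 1)
    have hy : ∀ y : S × S,
        2 * (1 - ∑ z, Real.sqrt (pairT P π (n + 1) y z * pairT Q lam (n + 1) y z))
          = ∑ z, (Real.sqrt (pairT P π (n + 1) y z) - Real.sqrt (pairT Q lam (n + 1) y z)) ^ 2 := by
      intro y
      have hz : ∀ z, (Real.sqrt (pairT P π (n + 1) y z) - Real.sqrt (pairT Q lam (n + 1) y z)) ^ 2
          = pairT P π (n + 1) y z + pairT Q lam (n + 1) y z
            - 2 * Real.sqrt (pairT P π (n + 1) y z * pairT Q lam (n + 1) y z) := by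
        intro z
        rw [sub_sq, Real.sq_sqrt (hT y z), Real.sq_sqrt (hU y z), Real.sqrt_mul (hT y z)]
        ring
      simp only [hz]
      rw [Finset.sum_sub_distrib, Finset.sum_add_distrib, hT1, hU1, ← Finset.mul_sum]
      ring
    rw [Finset.mul_sum]
    simp only [hy]
    simp only [Fintype.sum_prod_type, pairT, Nat.cast_add, Nat.cast_one]
    -- reorder the summation from `u, v, s, t` to `s, u, v, t`
    exact (Finset.sum_congr rfl fun u _ => Finset.sum_comm).trans Finset.sum_comm
  · rw [ac_iff_summable_loss hA hν hDP hμ hDQ, ac_iff_summable_loss hA hμ hDQ hν hDP]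
    simp only [mul_comm]

end MarkovSFT
end

section
/- Let X_A ⊂ S^ℤ be a topologically mixing subshift of finite type and μ = μ_{(P_n : n ∈ ℤ)} a Markov measure on X_A satisfying the Doeblin condition. If the left shift T is nonsingular with respect to μ, then for all s,t ∈ S: P_{n−1}(s,t) − P_n(s,t) → 0 as n → ∞, and P̂_{−n}(s,t) − P̂_{−(n+1)}(s,t) → 0 as n → ∞. -/
/-!
Write `ν` for the image of `μ` under the shift, so that `ν ≪ μ`. For fixed states `s`, `t` let
`f_n = 1[x_n = s, x_{n+1} = t] - P_n(s,t) 1[x_n = s]`. By the Markov property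
(`real_forward`) the `f_n` are martingale differences for `μ`; in particular they are bounded by
`1` and pairwise orthogonal in `L²(μ)`. Bessel's inequality shows that `f_n → 0` weakly in `L²(μ)`,
and since the `f_n` are uniformly bounded and `L²` is dense in `L¹`, also `∫ f_n g dμ → 0` for
every integrable `g` (`tendsto_integral_of_orthogonal`). With `g = dν/dμ` this gives
`∫ f_n dν = π_{n+1}(s) (P_{n+1}(s,t) - P_n(s,t)) → 0`. The Doeblin condition and primitivity bound
`π_{n+1}(s)` below by a positive constant (`exists_pos_le_dist`), which yields the first claim.

The second claim is the same argument run backwards in time, with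
`1[x_{-n} = s, x_{-n-1} = t] - P̂_{-n}(s,t) 1[x_{-n} = s]` and the reverse Markov property
(`real_backward`). Both directions go through `tendsto_of_conditional`.
-/

open MeasureTheory Filter Topology

namespace MarkovSFT

/-! ### Weak convergence to zero of bounded orthogonal sequences -/

/-- Bessel's inequality for an orthogonal sequence in the unit ball, in limit form. The vectors
are not normalised, and some may vanish. -/
lemma tendsto_inner_of_orthogonal {E : Type*} [NormedAddCommGroup E] [InnerProductSpace ℝ E]
    (v : ℕ → E) (hv : ∀ n, ‖v n‖ ≤ 1) (ho : ∀ i j, i < j → inner ℝ (v j) (v i) = 0) (x : E) :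
    Tendsto (fun n => inner ℝ x (v n)) atTop (𝓝 0) := by
  have ho' : ∀ i j, i ≠ j → inner ℝ (v i) (v j) = 0 := by
    intro i j hij
    rcases lt_or_gt_of_ne hij with h | h
    · rw [real_inner_comm]; exact ho i j h
    · exact ho j i h
  set c : ℕ → ℝ := fun n => inner ℝ x (v n) with hc
  have hs : Summable fun n => c n ^ 2 := by
    refine summable_of_sum_range_le (c := ‖x‖ ^ 2) (fun n => sq_nonneg _) fun N => ?_
    set y := ∑ i ∈ Finset.range N, c i • v i with hy
    have h1 : inner ℝ x y = ∑ i ∈ Finset.range N, c i ^ 2 := by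
      rw [hy, inner_sum]
      refine Finset.sum_congr rfl fun i _ => ?_
      rw [inner_smul_right, sq]
    have h2 : ‖y‖ ^ 2 ≤ ∑ i ∈ Finset.range N, c i ^ 2 := by
      rw [← real_inner_self_eq_norm_sq]
      nth_rewrite 1 [hy]
      rw [sum_inner]
      refine Finset.sum_le_sum fun i hi => ?_
      rw [hy, inner_sum, Finset.sum_eq_single i]
      · rw [inner_smul_left, inner_smul_right, real_inner_self_eq_norm_sq]
        have := hv i
        have h3 : ‖v i‖ ^ 2 ≤ 1 := by
          have := norm_nonneg (v i)
          nlinarith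
        simp only [conj_trivial]
        nlinarith [sq_nonneg (c i)]
      · intro j _ hj
        rw [inner_smul_left, inner_smul_right, ho' i j hj.symm]
        simp
      · intro h; exact absurd hi h
    have h3 := norm_sub_sq_real x y
    nlinarith [sq_nonneg ‖x - y‖]
  have h0 := hs.tendsto_atTop_zero
  have h1 : Tendsto (fun n => Real.sqrt (c n ^ 2)) atTop (𝓝 0) := by
    simpa [Function.comp_def] using (Real.continuous_sqrt.tendsto 0).comp h0
  simp only [Real.sqrt_sq_eq_abs] at h1
  exact (tendsto_zero_iff_abs_tendsto_zero _).2 h1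

/-- A uniformly bounded orthogonal sequence in `L²(μ)` tends to zero when tested against any
finite measure `ν ≪ μ`: it tends to zero weakly in `L²`, and by boundedness this extends to
densities in `L¹`. -/
lemma tendsto_integral_of_orthogonal {X : Type*} [MeasurableSpace X] (μ ν : Measure X)
    [IsProbabilityMeasure μ] [IsFiniteMeasure ν] (hνμ : ν ≪ μ) (f : ℕ → X → ℝ)
    (hf : ∀ n, Measurable (f n)) (hb : ∀ n x, ‖f n x‖ ≤ 1)
    (ho : ∀ i j, i < j → ∫ x, f j x * f i x ∂μ = 0) :
    Tendsto (fun n => ∫ x, f n x ∂ν) atTop (𝓝 0) := by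
  have hfm : ∀ n, MemLp (f n) 2 μ := fun n =>
    MemLp.of_bound (hf n).aestronglyMeasurable 1 (Eventually.of_forall (hb n))
  have hinner : ∀ (g h : X → ℝ) (hg : MemLp g 2 μ) (hh : MemLp h 2 μ),
      inner ℝ (hg.toLp g) (hh.toLp h) = ∫ x, g x * h x ∂μ := by
    intro g h hg hh
    rw [L2.inner_def]
    refine integral_congr_ae ?_
    filter_upwards [hg.coeFn_toLp, hh.coeFn_toLp] with x h1 h2
    rw [h1, h2]
    simp [mul_comm]
  have hweak : ∀ g : X → ℝ, MemLp g 2 μ →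
      Tendsto (fun n => ∫ x, g x * f n x ∂μ) atTop (𝓝 0) := by
    intro g hg
    have := tendsto_inner_of_orthogonal (fun n => (hfm n).toLp (f n)) (fun n => ?_)
      (fun i j hij => ?_) (hg.toLp g)
    · simpa only [hinner] using this
    · refine (Lp.norm_le_of_ae_bound zero_le_one (C := 1) ?_).trans ?_
      · filter_upwards [(hfm n).coeFn_toLp] with x h1
        rw [h1]; exact hb n x
      · simp [measureUnivNNReal]
    · rw [hinner]; exact ho i j hij
  set g : X → ℝ := fun x => (ν.rnDeriv μ x).toReal with hgdef
  have hg : Integrable g μ := Measure.integrable_toReal_rnDeriv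
  have heq : ∀ n, ∫ x, f n x ∂ν = ∫ x, g x * f n x ∂μ := fun n => by
    rw [← integral_rnDeriv_smul hνμ]; rfl
  simp only [heq]
  rw [Metric.tendsto_atTop]
  intro ε hε
  obtain ⟨h, hh, -⟩ := (memLp_one_iff_integrable.2 hg).exists_simpleFunc_eLpNorm_sub_lt
    (by simp) (ε := ENNReal.ofReal (ε / 2)) (by simpa using hε)
  have hhi : Integrable h μ := memLp_one_iff_integrable.1 (h.memLp_of_isFiniteMeasure 1 μ)
  obtain ⟨N, hN⟩ := Metric.tendsto_atTop.1 (hweak h (h.memLp_of_isFiniteMeasure 2 μ)) (ε / 2)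
    (by positivity)
  refine ⟨N, fun n hn => ?_⟩
  have h1 := hN n hn
  rw [dist_zero_right] at h1 ⊢
  have hfb : ∀ k : X → ℝ, Integrable k μ → Integrable (fun x => k x * f n x) μ := fun k hk =>
    hk.mul_bdd (c := 1) (hf n).aestronglyMeasurable (Eventually.of_forall (hb n))
  have hsplit : ∫ x, g x * f n x ∂μ = ∫ x, (g - h) x * f n x ∂μ + ∫ x, h x * f n x ∂μ := by
    rw [← integral_add (hfb _ (hg.sub hhi)) (hfb _ hhi)]
    refine integral_congr_ae (Eventually.of_forall fun x => ?_)
    simp only [Pi.sub_apply]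
    ring
  have h2 : ‖∫ x, (g - h) x * f n x ∂μ‖ ≤ ε / 2 := by
    have h3 : ‖∫ x, (g - h) x * f n x ∂μ‖ ≤ ∫ x, ‖(g - h) x‖ ∂μ := by
      refine norm_integral_le_of_norm_le (hg.sub hhi).norm (Eventually.of_forall fun x => ?_)
      rw [norm_mul]
      exact mul_le_of_le_one_right (norm_nonneg _) (hb n x)
    refine h3.trans ?_
    rw [integral_norm_eq_lintegral_enorm (hg.sub hhi).aestronglyMeasurable,
      ← eLpNorm_one_eq_lintegral_enorm]
    exact ENNReal.toReal_le_of_le_ofReal (by positivity) hh.le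
  rw [hsplit]
  calc _ ≤ _ := norm_add_le _ _
    _ < ε := by linarith

/-- If `p j` is the conditional probability of `C j` given `B j` together with any
earlier `B i` or `C i`, then `p j` is asymptotically the conditional probability under every
finite `ν ≪ μ`. The functions `1_{C j} - p j 1_{B j}` form a bounded orthogonal sequence. -/
lemma tendsto_of_conditional {X : Type*} [MeasurableSpace X] (μ ν : Measure X)
    [IsProbabilityMeasure μ] [IsFiniteMeasure ν] (hνμ : ν ≪ μ) (B C : ℕ → Set X) (p : ℕ → ℝ)
    (hB : ∀ j, MeasurableSet (B j)) (hC : ∀ j, MeasurableSet (C j)) (hCB : ∀ j, C j ⊆ B j)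
    (hp0 : ∀ j, 0 ≤ p j) (hp1 : ∀ j, p j ≤ 1)
    (h1 : ∀ i j, i < j → μ.real (C j ∩ B i) = p j * μ.real (B j ∩ B i))
    (h2 : ∀ i j, i < j → μ.real (C j ∩ C i) = p j * μ.real (B j ∩ C i)) :
    Tendsto (fun j => ν.real (C j) - p j * ν.real (B j)) atTop (𝓝 0) := by
  classical
  set f : ℕ → X → ℝ := fun j x =>
    (C j).indicator (fun _ => (1 : ℝ)) x - p j * (B j).indicator (fun _ => (1 : ℝ)) x with hf
  have hint : ∀ (κ : Measure X) [IsFiniteMeasure κ] (D : Set X), MeasurableSet D →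
      Integrable (D.indicator (fun _ => (1 : ℝ))) κ := fun κ _ D hD =>
    (integrable_const 1).indicator hD
  have hval : ∀ (κ : Measure X) (D : Set X), MeasurableSet D →
      ∫ x, D.indicator (fun _ => (1 : ℝ)) x ∂κ = κ.real D := fun κ D hD => by
    rw [integral_indicator_const _ hD]; simp
  have key := tendsto_integral_of_orthogonal μ ν hνμ f (fun n => ?_) (fun n x => ?_)
    (fun i j hij => ?_)
  · refine key.congr fun j => ?_
    simp only [hf]
    rw [integral_sub (hint ν _ (hC j)) ((hint ν _ (hB j)).const_mul _), integral_const_mul,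
      hval ν _ (hC j), hval ν _ (hB j)]
  · exact (measurable_const.indicator (hC n)).sub
      ((measurable_const.indicator (hB n)).const_mul _)
  · have := hp0 n
    have := hp1 n
    rw [Real.norm_eq_abs, abs_le]
    simp only [hf]
    by_cases hxC : x ∈ C n
    · have hxB := hCB n hxC
      simp only [hxC, hxB, Set.indicator_of_mem]
      constructor <;> linarith
    · by_cases hxB : x ∈ B n
      · simp only [hxC, hxB, Set.indicator_of_mem, Set.indicator_of_notMem, not_false_eq_true]
        constructor <;> linarith
      · simp only [hxC, hxB, Set.indicator_of_notMem, not_false_eq_true]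
        constructor <;> linarith
  · have hexp : ∀ x, f j x * f i x =
        ((C j ∩ C i).indicator (fun _ => (1 : ℝ)) x
          - p j * (B j ∩ C i).indicator (fun _ => (1 : ℝ)) x)
        - p i * ((C j ∩ B i).indicator (fun _ => (1 : ℝ)) x
          - p j * (B j ∩ B i).indicator (fun _ => (1 : ℝ)) x) := by
      intro x
      simp only [hf, Set.indicator_apply, Set.mem_inter_iff]
      by_cases a1 : x ∈ C j <;> by_cases a2 : x ∈ C i <;> by_cases a3 : x ∈ B j <;>
        by_cases a4 : x ∈ B i <;> simp [a1, a2, a3, a4] <;> ring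
    simp only [hexp]
    have i1 := hint μ _ ((hC j).inter (hC i))
    have i2 := (hint μ _ ((hB j).inter (hC i))).const_mul (p j)
    have i3 := hint μ _ ((hC j).inter (hB i))
    have i4 := (hint μ _ ((hB j).inter (hB i))).const_mul (p j)
    rw [integral_sub (by exact i1.sub i2) (by exact (i3.sub i4).const_mul _), integral_sub i1 i2,
      integral_const_mul, integral_const_mul, integral_sub i3 i4, integral_const_mul,
      hval μ _ ((hC j).inter (hC i)), hval μ _ ((hB j).inter (hC i)),
      hval μ _ ((hC j).inter (hB i)), hval μ _ ((hB j).inter (hB i)), h1 i j hij, h2 i j hij]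
    ring

/-! ### The Markov property in both time directions -/

/-- The word `x_{k+1} ⋯ x_{k+1+m}` read off from `x`. -/
def window {S : Type*} (k : ℤ) (m : ℕ) (x : Seq S) : Fin (m + 1) → S :=
  fun i => x (k + 1 + ((i : ℕ) : ℤ))

lemma measurableSet_coord {S : Type*} [MeasurableSpace S] [MeasurableSingletonClass S]
    (n : ℤ) (s : S) : MeasurableSet {x : Seq S | x n = s} :=
  measurable_pi_apply (X := fun _ : ℤ => S) n (measurableSet_singleton s)

lemma measurableSet_pair {S : Type*} [MeasurableSpace S] [MeasurableSingletonClass S]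
    (n m : ℤ) (s t : S) : MeasurableSet {x : Seq S | x n = s ∧ x m = t} :=
  (measurableSet_coord n s).inter (measurableSet_coord m t)

lemma measurable_window {S : Type*} [MeasurableSpace S] (k : ℤ) (m : ℕ) :
    Measurable (window (S := S) k m) :=
  measurable_pi_lambda _ fun _ => measurable_pi_apply _

lemma window_preimage_singleton {S : Type*} (k : ℤ) (m : ℕ) (w : Fin (m + 1) → S) :
    window k m ⁻¹' {w} = {x : Seq S | ∀ i : Fin (m + 1), x (k + 1 + ((i : ℕ) : ℤ)) = w i} := by
  ext x
  simp [window, funext_iff]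

section Markov

variable {S : Type*} [Fintype S] [MeasurableSpace S]
  {A : S → S → Bool} {P : ℤ → S → S → ℝ} {π : ℤ → S → ℝ} {μ : Measure (Seq S)}

/-- A conditional probability that is the same on all cylinders making up a window event is the
conditional probability given that event. -/
lemma real_window_inter [MeasurableSingletonClass S] (hμ : IsMarkovMeasure μ A P π)
    (k : ℤ) (m : ℕ)
    (D : Set (Fin (m + 1) → S)) (F : Set (Seq S)) (c : ℝ)
    (h : ∀ w ∈ D, μ.real (window k m ⁻¹' {w} ∩ F) = c * μ.real (window k m ⁻¹' {w})) :
    μ.real (window k m ⁻¹' D ∩ F) = c * μ.real (window k m ⁻¹' D) := by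
  classical
  have := hμ.isProb
  have hm : ∀ w, MeasurableSet (window (S := S) k m ⁻¹' {w}) := fun w =>
    measurable_window k m (measurableSet_singleton w)
  have hsum : ∀ κ : Measure (Seq S), [IsFiniteMeasure κ] →
      ∑ w ∈ D.toFinset, κ.real (window k m ⁻¹' {w}) = κ.real (window k m ⁻¹' D) := by
    intro κ _
    rw [sum_measureReal_preimage_singleton _ (fun w _ => hm w), Set.coe_toFinset]
  have hD : MeasurableSet (window (S := S) k m ⁻¹' D) :=
    measurable_window k m (Set.toFinite D).measurableSet
  rw [← measureReal_restrict_apply hD, ← hsum, ← hsum, Finset.mul_sum]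
  refine Finset.sum_congr rfl fun w hw => ?_
  rw [measureReal_restrict_apply (hm w)]
  exact h w (by simpa using hw)

lemma real_cylinder (hμ : IsMarkovMeasure μ A P π) (k : ℤ) (m : ℕ) (w : Fin (m + 1) → S) :
    μ.real (window k m ⁻¹' {w}) = π (k + 1) (w 0) *
      ∏ i : Fin m, P (k + 1 + ((i : ℕ) : ℤ)) (w i.castSucc) (w i.succ) := by
  rw [window_preimage_singleton, measureReal_def, hμ.cylinder, ENNReal.toReal_ofReal]
  exact mul_nonneg (hμ.dist_nonneg _ _)
    (Finset.prod_nonneg fun i _ => (hμ.stochastic _).1 _ _)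

lemma real_coord (hμ : IsMarkovMeasure μ A P π) (n : ℤ) (s : S) :
    μ.real {x | x n = s} = π n s := by
  have h := real_cylinder hμ (n - 1) 0 (fun _ => s)
  rw [window_preimage_singleton] at h
  simpa using h

/-- Markov property: given a window event fixing the last letter `s`, the next letter is `t` with
probability `P s t`. -/
lemma real_forward [MeasurableSingletonClass S] (hμ : IsMarkovMeasure μ A P π)
    (k : ℤ) (m : ℕ)
    (D : Set (Fin (m + 1) → S)) (s t : S) (hD : ∀ w ∈ D, w (Fin.last m) = s) :
    μ.real (window k m ⁻¹' D ∩ {x | x (k + 1 + m + 1) = t}) =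
      P (k + 1 + m) s t * μ.real (window k m ⁻¹' D) := by
  refine real_window_inter hμ k m D _ _ fun w hw => ?_
  have hset : window k m ⁻¹' {w} ∩ {x | x (k + 1 + m + 1) = t} =
      window k (m + 1) ⁻¹' {(Fin.snoc w t : Fin (m + 1 + 1) → S)} := by
    ext x
    simp only [window_preimage_singleton, Set.mem_inter_iff, Set.mem_ofPred_eq]
    rw [Fin.forall_fin_succ' (n := m + 1)]
    simp only [Fin.val_castSucc, Fin.snoc_castSucc, Fin.val_last, Fin.snoc_last, Nat.cast_add,
      Nat.cast_one, add_assoc]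
  rw [hset, real_cylinder hμ, real_cylinder hμ, Fin.prod_univ_castSucc]
  have h0 : (Fin.snoc w t : Fin (m + 1 + 1) → S) 0 = w 0 := by
    rw [← Fin.castSucc_zero, Fin.snoc_castSucc]
  simp only [h0, Fin.snoc_castSucc, Fin.succ_castSucc, Fin.succ_last, Fin.snoc_last, hD w hw,
    Fin.val_castSucc, Fin.val_last]
  ring

/-- Reverse Markov property: given a window event fixing the first letter `s`, the preceding
letter is `t` with probability `reverseP s t`. -/
lemma real_backward [MeasurableSingletonClass S] (hμ : IsMarkovMeasure μ A P π)
    (k : ℤ) (m : ℕ)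
    (D : Set (Fin (m + 1) → S)) (s t : S) (hD : ∀ w ∈ D, w 0 = s) (hs : 0 < π (k + 1) s) :
    μ.real (window k m ⁻¹' D ∩ {x | x k = t}) =
      reverseP P π (k + 1) s t * μ.real (window k m ⁻¹' D) := by
  refine real_window_inter hμ k m D _ _ fun w hw => ?_
  have hset : window k m ⁻¹' {w} ∩ {x | x k = t} =
      window (k - 1) (m + 1) ⁻¹' {(Fin.cons t w : Fin (m + 1 + 1) → S)} := by
    ext x
    simp only [window_preimage_singleton, Set.mem_inter_iff, Set.mem_ofPred_eq]
    rw [Fin.forall_fin_succ (n := m + 1), and_comm]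
    have hidx : ∀ i : ℕ, k + ((i + 1 : ℕ) : ℤ) = k + 1 + (i : ℤ) := by
      intro i; push_cast; ring
    simp only [sub_add_cancel, Fin.val_zero, Nat.cast_zero, add_zero, Fin.cons_zero,
      Fin.val_succ, Fin.cons_succ, hidx]
  rw [hset, real_cylinder hμ, real_cylinder hμ, Fin.prod_univ_succ, reverseP, if_pos hs]
  have hidx : ∀ i : Fin m, k + (((i : ℕ) + 1 : ℕ) : ℤ) = k + 1 + ((i : ℕ) : ℤ) := by
    intro i; push_cast; ring
  simp only [sub_add_cancel, add_sub_cancel_right, Fin.cons_zero, Fin.castSucc_zero,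
    Fin.cons_succ, Fin.val_zero, Nat.cast_zero, add_zero, ← Fin.succ_castSucc, Fin.val_succ,
    hidx, hD w hw]
  field_simp

/-- Under the Doeblin condition the one-dimensional marginals are bounded away from zero: every
state is reached from every other along an admissible path of the same length `M`. -/
lemma exists_pos_le_dist (hA : IsPrimitive A) (hμ : IsMarkovMeasure μ A P π)
    (hD : Doeblin A P) : ∃ c : ℝ, 0 < c ∧ ∀ n s, c ≤ π n s := by
  obtain ⟨M, -, hM⟩ := hA
  obtain ⟨δ, hδ, hP⟩ := hD
  rcases isEmpty_or_nonempty S with hS | hS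
  · exact ⟨1, one_pos, fun _ s => (hS.false s).elim⟩
  have hcard : (0 : ℝ) < Fintype.card S := by exact_mod_cast Fintype.card_pos
  refine ⟨δ ^ M / Fintype.card S, by positivity, fun n s => ?_⟩
  have hpath : ∀ r, π (n - M) r * δ ^ M ≤ π n s := by
    intro r
    obtain ⟨u, hu0, huM, hu⟩ := hM r s
    have hind : ∀ i ≤ M, π (n - M) r * δ ^ i ≤ π (n - M + i) (u i) := by
      intro i
      induction i with
      | zero => intro _; simp [hu0]
      | succ i ih =>
        intro hi
        have h1 := ih (by omega)
        have h2 : δ ≤ P (n - M + i) (u i) (u (i + 1)) := (hP _ _ _).2 (hu i (by omega))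
        have h3 := hμ.consistent (n - M + i) (u (i + 1))
        have h4 : π (n - M + i) (u i) * P (n - M + i) (u i) (u (i + 1)) ≤
            ∑ q, π (n - M + i) q * P (n - M + i) q (u (i + 1)) :=
          Finset.single_le_sum (f := fun q => π (n - M + i) q * P (n - M + i) q (u (i + 1)))
            (fun q _ => mul_nonneg (hμ.dist_nonneg _ _) ((hμ.stochastic _).1 _ _))
            (Finset.mem_univ _)
        have h5 : π (n - M) r * δ ^ (i + 1) ≤
            π (n - M + i) (u i) * P (n - M + i) (u i) (u (i + 1)) := by
          rw [pow_succ, ← mul_assoc]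
          exact mul_le_mul h1 h2 hδ.le (hμ.dist_nonneg _ _)
        rw [h3] at h4
        push_cast
        rw [← add_assoc]
        exact h5.trans h4
    have := hind M le_rfl
    rwa [sub_add_cancel, huM] at this
  have hsum := Finset.sum_le_sum fun r (_ : r ∈ Finset.univ) => hpath r
  rw [← Finset.sum_mul, hμ.dist_sum, Finset.sum_const, nsmul_eq_mul, one_mul,
    Finset.card_univ] at hsum
  rw [div_le_iff₀ hcard]
  linarith

end Markov

section Marginals

variable {S : Type*} [Fintype S] [MeasurableSpace S] [MeasurableSingletonClass S]
  {A : S → S → Bool} {P : ℤ → S → S → ℝ} {π : ℤ → S → ℝ} {μ : Measure (Seq S)}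

lemma real_pair (hμ : IsMarkovMeasure μ A P π) (n : ℤ) (s t : S) :
    μ.real {x | x n = s ∧ x (n + 1) = t} = P n s t * π n s := by
  have h := real_forward hμ (n - 1) 0 {w | w 0 = s} s t (fun w hw => hw)
  have e : window (n - 1) 0 ⁻¹' {w | w 0 = s} = {x : Seq S | x n = s} := by
    ext x; simp [window]
  rw [e, real_coord hμ] at h
  simpa [Set.inter_def] using h

lemma real_pair_reverse (hμ : IsMarkovMeasure μ A P π) (n : ℤ) (s t : S) (hs : 0 < π n s) :
    μ.real {x | x n = s ∧ x (n - 1) = t} = reverseP P π n s t * π n s := by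
  have h := real_backward hμ (n - 1) 0 {w | w 0 = s} s t (fun w hw => hw) (by simpa using hs)
  have e : window (n - 1) 0 ⁻¹' {w | w 0 = s} = {x : Seq S | x n = s} := by
    ext x; simp [window]
  rw [e, real_coord hμ] at h
  simpa [Set.inter_def] using h

lemma reverseP_mem_Icc (hμ : IsMarkovMeasure μ A P π) (n : ℤ) (s t : S) (hs : 0 < π n s) :
    0 ≤ reverseP P π n s t ∧ reverseP P π n s t ≤ 1 := by
  have := hμ.isProb
  have h := real_pair_reverse hμ n s t hs
  have h1 : μ.real {x | x n = s ∧ x (n - 1) = t} ≤ μ.real {x | x n = s} :=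
    measureReal_mono fun x hx => hx.1
  rw [real_coord hμ, h] at h1
  have h0 : 0 ≤ reverseP P π n s t * π n s := h ▸ measureReal_nonneg
  exact ⟨nonneg_of_mul_nonneg_left h0 hs, by nlinarith⟩

end Marginals

lemma real_map_shift {S : Type*} [MeasurableSpace S] (μ : Measure (Seq S)) (E : Set (Seq S))
    (hE : MeasurableSet E) :
    (Measure.map (shiftMap (S := S)) μ).real E = μ.real (shiftMap ⁻¹' E) :=
  map_measureReal_apply (measurable_pi_lambda _ fun _ => measurable_pi_apply _) hE

/-- A uniform positive lower bound on the weights `a j` may be divided out of a null sequence. -/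
lemma tendsto_of_mul_tendsto {a d : ℕ → ℝ} {c : ℝ} (hc : 0 < c) (ha : ∀ j, c ≤ a j)
    (h : Tendsto (fun j => d j * a j) atTop (𝓝 0)) : Tendsto d atTop (𝓝 0) := by
  have h' := (h.abs).div_const c
  rw [abs_zero, zero_div] at h'
  refine squeeze_zero_norm (fun j => ?_) h'
  rw [Real.norm_eq_abs, le_div_iff₀ hc, abs_mul, abs_of_nonneg (hc.le.trans (ha j))]
  exact mul_le_mul_of_nonneg_left (ha j) (abs_nonneg _)

/-! ### Vanishing of the transition differences -/

/-- **Corollary (nonsingularity of the shift).**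
If the shift is nonsingular with respect to a Markov measure with the Doeblin
condition on a topologically mixing SFT, then `P_{n-1}(s,t) − P_n(s,t) → 0` and
`P̂_{-n}(s,t) − P̂_{-(n+1)}(s,t) → 0` as `n → ∞`, for all `s, t`. -/
theorem transition_differences_tendsto_zero_of_nonsingular
    {S : Type*} [Fintype S] [MeasurableSpace S] [MeasurableSingletonClass S]
    (A : S → S → Bool) (hA : IsPrimitive A)
    (P : ℤ → S → S → ℝ) (π : ℤ → S → ℝ) (μ : Measure (Seq S))
    (hμ : IsMarkovMeasure μ A P π) (hD : Doeblin A P)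
    (hns : ShiftNonsingular μ) :
    ∀ s t : S,
      Tendsto (fun n : ℕ => P ((n : ℤ) - 1) s t - P (n : ℤ) s t) atTop (𝓝 0) ∧
      Tendsto (fun n : ℕ =>
          reverseP P π (-(n : ℤ)) s t - reverseP P π (-((n : ℤ) + 1)) s t)
        atTop (𝓝 0) := by
  intro s t
  have := hμ.isProb
  obtain ⟨c, hc, hπ⟩ := exists_pos_le_dist hA hμ hD
  have hpos : ∀ n s, 0 < π n s := fun n s => hc.trans_le (hπ n s)
  set ν := Measure.map (shiftMap (S := S)) μ with hν
  have hfin : IsFiniteMeasure ν := by rw [hν]; infer_instance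
  constructor
  · have key := tendsto_of_conditional μ ν hns.1
      (fun j => {x | x (j : ℤ) = s}) (fun j => {x | x (j : ℤ) = s ∧ x ((j : ℤ) + 1) = t})
      (fun j => P j s t) (fun j => measurableSet_coord _ _)
      (fun j => measurableSet_pair _ _ _ _)
      (fun j x hx => hx.1) (fun j => (hμ.stochastic _).1 _ _)
      (fun j => by
        rw [← (hμ.stochastic j).2 s]
        exact Finset.single_le_sum (fun q _ => (hμ.stochastic j).1 s q) (Finset.mem_univ t))
      ?_ ?_
    · have hdiff : ∀ j : ℕ, ν.real {x | x (j : ℤ) = s ∧ x ((j : ℤ) + 1) = t}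
          - P j s t * ν.real {x | x (j : ℤ) = s} =
          (P ((j : ℤ) + 1) s t - P j s t) * π ((j : ℤ) + 1) s := by
        intro j
        rw [hν, real_map_shift μ _ (measurableSet_coord _ _), real_map_shift μ _
          (measurableSet_pair _ _ _ _), sub_mul,
          ← real_pair hμ, ← real_coord hμ]
        rfl
      simp only [hdiff] at key
      have h1 := (tendsto_of_mul_tendsto hc (fun j => hπ _ _) key).neg
      rw [← tendsto_add_atTop_iff_nat 1]
      simpa using h1
    -- The past event occupies the first one or two letters of the window `x_i ⋯ x_j`.
    · intro i j hij
      obtain ⟨m, rfl⟩ := Nat.exists_eq_add_of_lt hij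
      have h := real_forward hμ ((i : ℤ) - 1) (m + 1) {w | w (Fin.last _) = s ∧ w 0 = s} s t
        (fun w hw => hw.1)
      have e : (i : ℤ) + ((m + 1 : ℕ) : ℤ) = ((i + m + 1 : ℕ) : ℤ) := by push_cast; ring
      rw [sub_add_cancel, e] at h
      convert h using 2
      · ext x
        simp only [window, Set.mem_inter_iff, Set.mem_ofPred_eq, Set.mem_preimage, Fin.val_last,
          e, Fin.val_zero, Nat.cast_zero, sub_add_cancel, add_zero]
        tauto
      · congr 1
        ext x
        simp only [window, Set.mem_inter_iff, Set.mem_ofPred_eq, Set.mem_preimage, Fin.val_last,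
          e, Fin.val_zero, Nat.cast_zero, sub_add_cancel, add_zero]
    · intro i j hij
      obtain ⟨m, rfl⟩ := Nat.exists_eq_add_of_lt hij
      have h := real_forward hμ ((i : ℤ) - 1) (m + 1)
        {w | w (Fin.last _) = s ∧ w 0 = s ∧ w 1 = t} s t (fun w hw => hw.1)
      have e : (i : ℤ) + ((m + 1 : ℕ) : ℤ) = ((i + m + 1 : ℕ) : ℤ) := by push_cast; ring
      rw [sub_add_cancel, e] at h
      convert h using 2
      · ext x
        simp only [window, Set.mem_inter_iff, Set.mem_ofPred_eq, Set.mem_preimage, Fin.val_last,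
          e, Fin.val_zero, Nat.cast_zero, sub_add_cancel, add_zero, Fin.val_one, Nat.cast_one]
        tauto
      · congr 1
        ext x
        simp only [window, Set.mem_inter_iff, Set.mem_ofPred_eq, Set.mem_preimage, Fin.val_last,
          e, Fin.val_zero, Nat.cast_zero, sub_add_cancel, add_zero, Fin.val_one, Nat.cast_one]
  · have key := tendsto_of_conditional μ ν hns.1
      (fun j => {x | x (-(j : ℤ)) = s}) (fun j => {x | x (-(j : ℤ)) = s ∧ x (-(j : ℤ) - 1) = t})
      (fun j => reverseP P π (-(j : ℤ)) s t) (fun j => measurableSet_coord _ _)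
      (fun j => measurableSet_pair _ _ _ _)
      (fun j x hx => hx.1) (fun j => (reverseP_mem_Icc hμ _ s t (hpos _ _)).1)
      (fun j => (reverseP_mem_Icc hμ _ s t (hpos _ _)).2)
      ?_ ?_
    · have hdiff : ∀ j : ℕ, ν.real {x | x (-(j : ℤ)) = s ∧ x (-(j : ℤ) - 1) = t}
          - reverseP P π (-(j : ℤ)) s t * ν.real {x | x (-(j : ℤ)) = s} =
          (reverseP P π (-(j : ℤ) + 1) s t - reverseP P π (-(j : ℤ)) s t)
            * π (-(j : ℤ) + 1) s := by
        intro j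
        rw [hν, real_map_shift μ _ (measurableSet_coord _ _), real_map_shift μ _
          (measurableSet_pair _ _ _ _), sub_mul,
          ← real_pair_reverse hμ _ s t (hpos _ _), ← real_coord hμ]
        congr 2
        ext x
        simp [shiftMap, shiftZ]
      simp only [hdiff] at key
      have h1 := tendsto_of_mul_tendsto hc (fun j => hπ _ _) key
      rw [← tendsto_add_atTop_iff_nat 1] at h1
      refine h1.congr fun n => ?_
      congr 2
      push_cast
      ring
    -- The event in the future occupies the last one or two letters of `x_{-j} ⋯ x_{-i}`.
    · intro i j hij
      obtain ⟨m, rfl⟩ := Nat.exists_eq_add_of_lt hij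
      have h := real_backward hμ (-((i + m + 1 : ℕ) : ℤ) - 1) (m + 1)
        {w | w 0 = s ∧ w (Fin.last _) = s} s t (fun w hw => hw.1) (hpos _ _)
      have e : -((i + m + 1 : ℕ) : ℤ) + ((m + 1 : ℕ) : ℤ) = -(i : ℤ) := by push_cast; ring
      rw [sub_add_cancel] at h
      convert h using 2
      · ext x
        simp only [window, Set.mem_inter_iff, Set.mem_ofPred_eq, Set.mem_preimage, Fin.val_last,
          e, Fin.val_zero, Nat.cast_zero, sub_add_cancel, add_zero]
        tauto
      · congr 1
        ext x
        simp only [window, Set.mem_inter_iff, Set.mem_ofPred_eq, Set.mem_preimage, Fin.val_last,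
          e, Fin.val_zero, Nat.cast_zero, sub_add_cancel, add_zero]
    · intro i j hij
      obtain ⟨m, rfl⟩ := Nat.exists_eq_add_of_lt hij
      have h := real_backward hμ (-((i + m + 1 : ℕ) : ℤ) - 1) (m + 1)
        {w | w 0 = s ∧ w (Fin.last _) = s ∧ w (Fin.last m).castSucc = t} s t
        (fun w hw => hw.1) (hpos _ _)
      have e : -((i + m + 1 : ℕ) : ℤ) + ((m + 1 : ℕ) : ℤ) = -(i : ℤ) := by push_cast; ring
      have e' : -((i + m + 1 : ℕ) : ℤ) + (m : ℤ) = -(i : ℤ) - 1 := by push_cast; ring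
      rw [sub_add_cancel] at h
      convert h using 2
      · ext x
        simp only [window, Set.mem_inter_iff, Set.mem_ofPred_eq, Set.mem_preimage, Fin.val_last,
          e, e', Fin.val_zero, Nat.cast_zero, sub_add_cancel, add_zero, Fin.val_castSucc]
        tauto
      · congr 1
        ext x
        simp only [window, Set.mem_inter_iff, Set.mem_ofPred_eq, Set.mem_preimage, Fin.val_last,
          e, e', Fin.val_zero, Nat.cast_zero, sub_add_cancel, add_zero, Fin.val_castSucc]

end MarkovSFT
end
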